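/- The map ∇wᵀ : B₁ → Ω₁ is a bijection whose inverse g : Ω₁ → B₁ is continuous, and for every x ∈ Ω₁ the minimax value has the alternative representation u(x) = ⟨x, g(x)⟩ − w(g(x)). -/

import Mathlib

/-!
Write `r = e^t`. In the variables `(t, θ)` the function `W` becomes a series in
`e^{mₙ² t} sin (mₙ θ)`, so it solves `∂_t = -∂_θ²`, and `S = ∂_t W - W` is the series of the square
wave. The argument rests on the signs of its derivatives for `t < 0`: `G = ∂_θ S` is positive on
`[0, π/4)` and negative on `(π/4, π/2]`, and `H = ∂_t S = -∂_θ G` is positive on `(0, π/2)`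
(`Gf_pos`, `Gf_neg`, `Hf_pos`). Both facts follow because `G` is a Jacobi theta function in `2θ`,
and the Jacobi triple product exhibits it as `cos (2θ)` times a product of decreasing positive
factors (`theta_antitone`).

*The gradient maps `B₁` into `Ω₁`.* In polar coordinates `w_p = e^{-t} A(t, θ)` with
`∂_θ A = cos θ · G`, so `A` rises on `[0, π/4]` and falls on `[π/4, π/2]`; its bounds reduce to
the values at `0`, `π/4`, `π/2` (`Af_bounds`), using `W(1, θ) = cos θ + sin θ - 1` (`W_boundary`).
The other component is the reflection of `A` in `θ = π/4`.

*The inner maximum.* `∂_r W = e^{-t} ∂_t W` has `t`-derivative `e^{-t} H > 0` and increases from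
`0` to `cos θ + sin θ`, so for `(x, y) ∈ Ω₁` the maximum over `r` is attained at a single radius
`Rad`, continuous in all variables, with value `Phi x y θ`.

*The outer minimum.* At the maximal radius the second `θ`-derivative of
`e^t (x cos θ + y sin θ) - W` vanishes, because `∂_θ² W = -∂_t W`. Thus every point of the
graph of `Phi` is touched from below by a smooth function whose second derivative vanishes there,
and `Phi` is convex (`Phi_convexOn`). A minimiser is interior and critical (`min_interior`), and a critical point is a
minimiser (`critical_min`). If there were two minimisers, `Phi` would be constant between them; but
along the line of slope `dt/dθ = -G/H` the second derivative is `G²/H > 0` away from `θ = π/4`,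
which is impossible for a function lying below a constant and touching it (`min_unique`).

Hence the gradient equation `∇w = (x, y)`, which says that `e^t (x cos θ + y sin θ) - W` is critical
(`gradw_eq_iff`), has exactly one solution in `B₁`, namely the saddle point `(Rad, Ang)` of the
minimax problem. It depends continuously on `(x, y)` by compactness (`continuousOn_argmax`), and the
saddle value is `⟨x, g(x)⟩ - w(g(x))`.
-/

open Real Set Topology Filter

/-- `mIdx n = 4(n+1) - 2 = 4n + 2`, the odd-indexed frequencies `2, 6, 10, …`. -/
def mIdx (n : ℕ) : ℕ := 4 * n + 2

/-- `W(r,θ) = (8/π) ∑_{n≥1} r^{mₙ²} sin(mₙ θ) / ((mₙ² − 1) mₙ)` with `mₙ = 4n − 2`. -/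
noncomputable def W (r θ : ℝ) : ℝ :=
  (8 / π) * ∑' n : ℕ,
    r ^ (mIdx n ^ 2) * Real.sin ((mIdx n : ℝ) * θ) / (((mIdx n : ℝ) ^ 2 - 1) * (mIdx n : ℝ))

/-- The minimax formula `u(x,y) = min_{θ∈[0,π/2]} max_{r∈[0,1]} ( r(x cos θ + y sin θ) − W(r,θ) )`.
(The extrema are attained, so `⨅`/`⨆` over the compact index sets agree with min/max.) -/
noncomputable def u (x y : ℝ) : ℝ :=
  ⨅ θ : Icc (0 : ℝ) (π / 2), ⨆ r : Icc (0 : ℝ) 1,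
    ((r : ℝ) * (x * Real.cos (θ : ℝ) + y * Real.sin (θ : ℝ)) - W (r : ℝ) (θ : ℝ))

/-- `w` in Cartesian coordinates: `w(r cos θ, r sin θ) = W(r,θ)`.  On the open sector `B₁`
(where `p, q > 0`) this is `W(√(p²+q²), arctan(q/p))`. -/
noncomputable def w (p q : ℝ) : ℝ := W (Real.sqrt (p ^ 2 + q ^ 2)) (Real.arctan (q / p))

/-- First partial `w_p`. -/
noncomputable def wp (p q : ℝ) : ℝ := deriv (fun s => w s q) p
/-- First partial `w_q`. -/
noncomputable def wq (p q : ℝ) : ℝ := deriv (fun t => w p t) q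
/-- Second partial `w_{pp}`. -/
noncomputable def wpp (p q : ℝ) : ℝ := deriv (fun s => wp s q) p
/-- Second partial `w_{qq}`. -/
noncomputable def wqq (p q : ℝ) : ℝ := deriv (fun t => wq p t) q
/-- Mixed second partial `w_{pq}`. -/
noncomputable def wpq (p q : ℝ) : ℝ := deriv (fun t => wp p t) q

/-- The open sector `B₁` in the first quadrant. -/
def B1 : Set (ℝ × ℝ) := {p : ℝ × ℝ | 0 < p.1 ∧ 0 < p.2 ∧ p.1 ^ 2 + p.2 ^ 2 < 1}

/-- The open unit square `Ω₁ = (0,1)²`. -/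
def Ω1 : Set (ℝ × ℝ) := (Ioo (0 : ℝ) 1) ×ˢ Ioo (0 : ℝ) 1

/-- The (transposed) gradient map `∇wᵀ : (p,q) ↦ (w_p, w_q)`. -/
noncomputable def gradw (p : ℝ × ℝ) : ℝ × ℝ := (wp p.1 p.2, wq p.1 p.2)

/-! ### The finite Jacobi triple product -/

/-- The finite `q`-Pochhammer product `∏_{i=1}^{n} (1 - q^i)`. -/
noncomputable def qP (q : ℝ) (n : ℕ) : ℝ := ∏ i ∈ Finset.range n, (1 - q ^ (i + 1))

/-- The reciprocal of `qP q j`, extended by `0` to negative `j`; with this convention the recursion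
`rho_pred` holds for every integer. -/
noncomputable def rho (q : ℝ) (j : ℤ) : ℝ := if j < 0 then 0 else (qP q j.toNat)⁻¹

/-- The `q`-binomial coefficient `[2N+1 choose N-k]`, for an integer `k`. -/
noncomputable def qBin (q : ℝ) (N : ℕ) (k : ℤ) : ℝ :=
  qP q (2 * N + 1) * rho q (N - k) * rho q (N + k + 1)

lemma qP_pos {q : ℝ} (h0 : 0 < q) (h1 : q < 1) (n : ℕ) : 0 < qP q n :=
  Finset.prod_pos fun i _ => sub_pos.2 (pow_lt_one₀ h0.le h1 (Nat.succ_ne_zero i))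

lemma qP_succ (q : ℝ) (n : ℕ) : qP q (n + 1) = qP q n * (1 - q ^ (n + 1)) :=
  Finset.prod_range_succ _ _

lemma rho_pred {q : ℝ} (h0 : 0 < q) (h1 : q < 1) (j : ℤ) :
    rho q (j - 1) = (1 - q ^ j) * rho q j := by
  unfold rho
  rcases lt_trichotomy j 0 with h | h | h
  · rw [if_pos h, if_pos (by omega)]; simp
  · subst h; simp
  · rw [if_neg (by omega), if_neg (by omega)]
    obtain ⟨n, rfl⟩ : ∃ n : ℕ, j = n + 1 := ⟨(j - 1).toNat, by omega⟩
    have e1 : ((n : ℤ) + 1 - 1).toNat = n := by omega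
    have e2 : ((n : ℤ) + 1).toNat = n + 1 := by omega
    have hq : q ^ ((n : ℤ) + 1) = q ^ (n + 1) := by exact_mod_cast zpow_natCast q (n + 1)
    rw [e1, e2, qP_succ, hq]
    have := (qP_pos h0 h1 n).ne'
    have h2 : (1 - q ^ (n + 1)) ≠ 0 := (sub_pos.2 (pow_lt_one₀ h0.le h1 (Nat.succ_ne_zero n))).ne'
    field_simp

/-- The Pascal-type recursion satisfied by the coefficients of the finite triple product. -/
lemma qBin_succ {q : ℝ} (h0 : 0 < q) (h1 : q < 1) (N : ℕ) (k : ℤ) :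
    qBin q (N + 1) k = (1 + q ^ (2 * (N + 1))) * qBin q N k
      + q ^ ((N : ℤ) + 1 - k) * qBin q N (k - 1) + q ^ ((N : ℤ) + k + 2) * qBin q N (k + 1) := by
  unfold qBin
  have hq : q ≠ 0 := h0.ne'
  have a1 := rho_pred h0 h1 ((N : ℤ) + 1 - k)
  have a2 := rho_pred h0 h1 ((N : ℤ) - k)
  have b1 := rho_pred h0 h1 ((N : ℤ) + k + 2)
  have b2 := rho_pred h0 h1 ((N : ℤ) + k + 1)
  rw [show (N : ℤ) + 1 - k - 1 = N - k by ring] at a1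
  rw [show (N : ℤ) + k + 2 - 1 = N + k + 1 by ring] at b1
  rw [show (N : ℤ) + k + 1 - 1 = N + k by ring] at b2
  rw [show ((N + 1 : ℕ) : ℤ) - k = N + 1 - k by push_cast; ring,
    show ((N + 1 : ℕ) : ℤ) + k + 1 = N + k + 2 by push_cast; ring,
    show (N : ℤ) - (k - 1) = N + 1 - k by ring, show (N : ℤ) + (k - 1) + 1 = N + k by ring,
    show (N : ℤ) - (k + 1) = N - k - 1 by ring, show (N : ℤ) + (k + 1) + 1 = N + k + 2 by ring,
    a2, b2, a1, b1, show 2 * (N + 1) + 1 = 2 * N + 1 + 1 + 1 by ring, qP_succ, qP_succ]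
  -- Everything is a polynomial in `α`, `β` and `q⁻¹`, where `α β = q ^ (2N + 3)`.
  set α := q ^ ((N : ℤ) + 1 - k) with hα
  set β := q ^ ((N : ℤ) + k + 2) with hβ
  have hα' : q ^ ((N : ℤ) - k) = α / q := by
    rw [hα, div_eq_mul_inv, ← zpow_sub_one₀ hq]; congr 1; ring
  have hβ' : q ^ ((N : ℤ) + k + 1) = β / q := by
    rw [hβ, div_eq_mul_inv, ← zpow_sub_one₀ hq]; congr 1; ring
  have hαβ : q ^ (2 * N + 1 + 1 + 1) = α * β := by
    rw [hα, hβ, ← zpow_add₀ hq, ← zpow_natCast]; congr 1; push_cast; ring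
  have hαβ' : q ^ (2 * N + 1 + 1) = α * β / q := by
    rw [← hαβ, pow_succ _ (2 * N + 1 + 1), mul_div_cancel_right₀ _ hq]
  rw [hα', hβ', hαβ, hαβ', show 2 * (N + 1) = 2 * N + 1 + 1 by ring, hαβ']
  field_simp
  ring

/-- The partial products of the triple product, at `z = e^{iφ}`. -/
noncomputable def tripleProd (q φ : ℝ) (N : ℕ) : ℝ :=
  ∏ n ∈ Finset.range N, (1 + 2 * q ^ (n + 1) * cos (2 * φ) + q ^ (2 * (n + 1)))

lemma HasSum.of_eq {ι : Type*} {f g : ι → ℝ} {a b : ℝ} (h : HasSum f a) (hf : ∀ k, g k = f k)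
    (hab : b = a) : HasSum g b := by
  rwa [hab, show g = f from funext hf]

/-- Finite form of the Jacobi triple product. -/
lemma hasSum_finite_triple {Q : ℝ} (h0 : 0 < Q) (h1 : Q < 1) (φ : ℝ) (N : ℕ) :
    HasSum (fun k : ℤ => qBin (Q ^ 2) N k * Q ^ (k * (k + 1)) * cos ((2 * k + 1) * φ))
      (2 * cos φ * tripleProd (Q ^ 2) φ N) ∧
    HasSum (fun k : ℤ => qBin (Q ^ 2) N k * Q ^ (k * (k + 1)) * sin ((2 * k + 1) * φ)) 0 := by
  have hq0 : 0 < Q ^ 2 := by positivity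
  have hq1 : Q ^ 2 < 1 := pow_lt_one₀ h0.le h1 two_ne_zero
  have hQ : Q ≠ 0 := h0.ne'
  induction N with
  | zero =>
    have hz : ∀ k : ℤ, k ∉ ({0, -1} : Finset ℤ) → qBin (Q ^ 2) 0 k = 0 := by
      intro k hk
      simp only [Finset.mem_insert, Finset.mem_singleton, not_or] at hk
      unfold qBin rho
      rcases lt_or_ge k 0 with h | h
      · rw [if_pos (show ((0 : ℕ) : ℤ) + k + 1 < 0 by push_cast; omega)]; simp
      · rw [if_pos (show ((0 : ℕ) : ℤ) - k < 0 by push_cast; omega)]; simp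
    have hne : 1 - Q ^ 2 ≠ 0 := by linarith
    have e0 : qBin (Q ^ 2) 0 0 = 1 := by simp [qBin, rho, qP, hne]
    have e1 : qBin (Q ^ 2) 0 (-1) = 1 := by simp [qBin, rho, qP, hne]
    constructor
    · refine (hasSum_sum_of_ne_finset_zero (s := ({0, -1} : Finset ℤ)) ?_).of_eq
        (fun _ => rfl) ?_
      · intro k hk; rw [hz k hk]; ring
      · rw [Finset.sum_pair (by decide), e0, e1]
        simp [tripleProd]
        rw [show (-2 + 1) * φ = -φ by ring, cos_neg]; ring
    · refine (hasSum_sum_of_ne_finset_zero (s := ({0, -1} : Finset ℤ)) ?_).of_eq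
        (fun _ => rfl) ?_
      · intro k hk; rw [hz k hk]; ring
      · rw [Finset.sum_pair (by decide), e0, e1]
        simp
        rw [show (-2 + 1) * φ = -φ by ring, sin_neg]; ring
  | succ N ih =>
    obtain ⟨hc, hs⟩ := ih
    set C := 2 * cos φ * tripleProd (Q ^ 2) φ N with hC
    have key : ∀ k : ℤ, qBin (Q ^ 2) (N + 1) k * Q ^ (k * (k + 1)) =
        (1 + (Q ^ 2) ^ (2 * (N + 1))) * (qBin (Q ^ 2) N k * Q ^ (k * (k + 1)))
        + (Q ^ 2) ^ (N + 1) * (qBin (Q ^ 2) N (k - 1) * Q ^ ((k - 1) * (k - 1 + 1)))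
        + (Q ^ 2) ^ (N + 1) * (qBin (Q ^ 2) N (k + 1) * Q ^ ((k + 1) * (k + 1 + 1))) := by
      intro k
      rw [qBin_succ hq0 hq1]
      have p1 : (Q ^ 2) ^ ((N : ℤ) + 1 - k) * Q ^ (k * (k + 1))
          = (Q ^ 2) ^ (N + 1) * Q ^ ((k - 1) * (k - 1 + 1)) := by
        rw [← zpow_natCast (Q ^ 2) (N + 1), ← zpow_natCast Q 2, ← zpow_mul, ← zpow_mul,
          ← zpow_add₀ hQ, ← zpow_add₀ hQ]
        congr 1; push_cast; ring
      have p2 : (Q ^ 2) ^ ((N : ℤ) + k + 2) * Q ^ (k * (k + 1))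
          = (Q ^ 2) ^ (N + 1) * Q ^ ((k + 1) * (k + 1 + 1)) := by
        rw [← zpow_natCast (Q ^ 2) (N + 1), ← zpow_natCast Q 2, ← zpow_mul, ← zpow_mul,
          ← zpow_add₀ hQ, ← zpow_add₀ hQ]
        congr 1; push_cast; ring
      linear_combination qBin (Q ^ 2) N (k - 1) * p1 + qBin (Q ^ 2) N (k + 1) * p2
    have sh1 : ∀ {f : ℤ → ℝ} {a : ℝ}, HasSum f a → HasSum (fun k => f (k - 1)) a := by
      intro f a h
      exact (Equiv.subRight (1 : ℤ)).hasSum_iff.2 h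
    have sh2 : ∀ {f : ℤ → ℝ} {a : ℝ}, HasSum f a → HasSum (fun k => f (k + 1)) a := by
      intro f a h
      exact (Equiv.addRight (1 : ℤ)).hasSum_iff.2 h
    have c1 := sh1 ((hc.mul_right (cos (2 * φ))).sub (hs.mul_right (sin (2 * φ))))
    have c2 := sh2 ((hc.mul_right (cos (2 * φ))).add (hs.mul_right (sin (2 * φ))))
    have s1 := sh1 ((hs.mul_right (cos (2 * φ))).add (hc.mul_right (sin (2 * φ))))
    have s2 := sh2 ((hs.mul_right (cos (2 * φ))).sub (hc.mul_right (sin (2 * φ))))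
    have ang1 : ∀ k : ℤ, (2 * (k : ℝ) + 1) * φ = (2 * ((k - 1 : ℤ) : ℝ) + 1) * φ + 2 * φ := by
      intro k; push_cast; ring
    have ang2 : ∀ k : ℤ, (2 * (k : ℝ) + 1) * φ = (2 * ((k + 1 : ℤ) : ℝ) + 1) * φ - 2 * φ := by
      intro k; push_cast; ring
    constructor
    · refine (((hc.mul_left (1 + (Q ^ 2) ^ (2 * (N + 1)))).add
        (c1.mul_left ((Q ^ 2) ^ (N + 1)))).add (c2.mul_left ((Q ^ 2) ^ (N + 1)))).of_eq (fun k => ?_) ?_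
      · have i1 := cos_add ((2 * ((k - 1 : ℤ) : ℝ) + 1) * φ) (2 * φ)
        have i2 := cos_sub ((2 * ((k + 1 : ℤ) : ℝ) + 1) * φ) (2 * φ)
        rw [← ang1] at i1
        rw [← ang2] at i2
        rw [key, add_mul, add_mul, mul_assoc, mul_assoc ((Q ^ 2) ^ (N + 1)),
          mul_assoc ((Q ^ 2) ^ (N + 1))]
        congr 1
        · congr 1
          rw [i1]; ring
        · rw [i2]; ring
      · simp only [hC, tripleProd, Finset.prod_range_succ]; ring
    · refine (((hs.mul_left (1 + (Q ^ 2) ^ (2 * (N + 1)))).add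
        (s1.mul_left ((Q ^ 2) ^ (N + 1)))).add (s2.mul_left ((Q ^ 2) ^ (N + 1)))).of_eq (fun k => ?_) ?_
      · have i1 := sin_add ((2 * ((k - 1 : ℤ) : ℝ) + 1) * φ) (2 * φ)
        have i2 := sin_sub ((2 * ((k + 1 : ℤ) : ℝ) + 1) * φ) (2 * φ)
        rw [← ang1] at i1
        rw [← ang2] at i2
        rw [key, add_mul, add_mul, mul_assoc, mul_assoc ((Q ^ 2) ^ (N + 1)),
          mul_assoc ((Q ^ 2) ^ (N + 1))]
        congr 1
        · congr 1
          rw [i1]; ring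
        · rw [i2]; ring
      · ring

/-! ### Monotonicity of the theta series -/

lemma qP_antitone {q : ℝ} (h0 : 0 < q) (h1 : q < 1) : Antitone (qP q) := by
  refine antitone_nat_of_succ_le fun n => ?_
  rw [qP_succ]
  exact mul_le_of_le_one_right (qP_pos h0 h1 n).le (by linarith [pow_pos h0 (n + 1)])

lemma qP_limit {q : ℝ} (h0 : 0 < q) (h1 : q < 1) :
    ∃ c, 0 < c ∧ (∀ n, c ≤ qP q n) ∧ Tendsto (qP q) atTop (𝓝 c) := by
  have hs : Summable fun i : ℕ => ‖-q ^ (i + 1)‖ := by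
    simp only [norm_neg, norm_pow, Real.norm_eq_abs, abs_of_pos h0]
    exact (summable_nat_add_iff 1).2 (summable_geometric_of_lt_one h0.le h1)
  have hm := multipliable_one_add_of_summable hs
  have hne : ∏' i : ℕ, (1 + -q ^ (i + 1)) ≠ 0 :=
    tprod_one_add_ne_zero_of_summable
      (fun i => by linarith [pow_lt_one₀ h0.le h1 (show i + 1 ≠ 0 by omega)]) hs
  have ht : Tendsto (qP q) atTop (𝓝 (∏' i : ℕ, (1 + -q ^ (i + 1)))) := by
    refine hm.hasProd.tendsto_prod_nat.congr fun n => ?_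
    simp [qP, sub_eq_add_neg]
  have hle := (qP_antitone h0 h1).le_of_tendsto ht
  refine ⟨_, lt_of_le_of_ne ?_ hne.symm, hle, ht⟩
  exact ge_of_tendsto' ht fun n => (qP_pos h0 h1 n).le

/-- The factor with index `n` is at least its value `(1 - q^{n+1})²` at `φ = π / 2`. -/
lemma tripleProd_lower {q φ : ℝ} (h0 : 0 < q) (h1 : q < 1) (N : ℕ) :
    qP q N ^ 2 ≤ tripleProd q φ N := by
  rw [qP, ← Finset.prod_pow]
  refine Finset.prod_le_prod (fun i _ => sq_nonneg _) fun i _ => ?_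
  have := neg_one_le_cos (2 * φ)
  have hq := pow_pos h0 (i + 1)
  rw [mul_comm 2 (i + 1), pow_mul]
  nlinarith

lemma tripleProd_anti {q φ ψ : ℝ} (h0 : 0 < q) (hφ : 0 ≤ φ) (h : φ ≤ ψ) (hψ : ψ ≤ π / 2)
    (N : ℕ) : tripleProd q ψ N ≤ tripleProd q φ N := by
  refine Finset.prod_le_prod (fun i _ => ?_) fun i _ => ?_
  · have := neg_one_le_cos (2 * ψ)
    have hq := pow_pos h0 (i + 1)
    rw [mul_comm 2 (i + 1), pow_mul]
    nlinarith [sq_nonneg (q ^ (i + 1) - 1)]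
  · have : cos (2 * ψ) ≤ cos (2 * φ) :=
      cos_le_cos_of_nonneg_of_le_pi (by linarith) (by linarith) (by linarith)
    have hq := pow_pos h0 (i + 1)
    nlinarith

/-- Passing to the limit in the finite triple product. -/
lemma triple_limit {Q : ℝ} (h0 : 0 < Q) (h1 : Q < 1) :
    ∃ c, 0 < c ∧ (∀ n, c ≤ qP (Q ^ 2) n) ∧ ∀ φ, Tendsto
      (fun N => c * (cos φ * tripleProd (Q ^ 2) φ N)) atTop
      (𝓝 (∑' n : ℕ, Q ^ (n * (n + 1)) * cos ((2 * n + 1) * φ))) := by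
  have hq0 : 0 < Q ^ 2 := by positivity
  have hq1 : Q ^ 2 < 1 := pow_lt_one₀ h0.le h1 two_ne_zero
  obtain ⟨c, hc, hle, ht⟩ := qP_limit hq0 hq1
  refine ⟨c, hc, hle, fun φ => ?_⟩
  have hrho0 : ∀ j, 0 ≤ rho (Q ^ 2) j := by
    intro j; unfold rho; split_ifs
    · exact le_rfl
    · exact inv_nonneg.2 (qP_pos hq0 hq1 _).le
  have hrho1 : ∀ j, rho (Q ^ 2) j ≤ c⁻¹ := by
    intro j; unfold rho; split_ifs
    · exact inv_nonneg.2 hc.le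
    · exact inv_anti₀ hc (hle _)
  have hrhoT : Tendsto (rho (Q ^ 2)) atTop (𝓝 c⁻¹) := by
    have h2 : Tendsto (fun j : ℤ => (qP (Q ^ 2) j.toNat)⁻¹) atTop (𝓝 c⁻¹) := by
      refine (ht.comp ?_).inv₀ hc.ne'
      refine tendsto_atTop.2 fun n => ?_
      filter_upwards [eventually_ge_atTop (n : ℤ)] with j hj
      omega
    refine h2.congr' ?_
    filter_upwards [eventually_ge_atTop (0 : ℤ)] with j hj
    rw [rho, if_neg (by omega)]
  have hNat : Tendsto (fun N : ℕ => (N : ℤ)) atTop atTop := tendsto_natCast_atTop_atTop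
  have hbT : ∀ k : ℤ, Tendsto (fun N => qBin (Q ^ 2) N k) atTop (𝓝 c⁻¹) := by
    intro k
    have t1 : Tendsto (fun N : ℕ => qP (Q ^ 2) (2 * N + 1)) atTop (𝓝 c) := by
      refine ht.comp (tendsto_atTop.2 fun n => ?_)
      filter_upwards [eventually_ge_atTop n] with j hj
      omega
    have t2 : Tendsto (fun N : ℕ => rho (Q ^ 2) ((N : ℤ) - k)) atTop (𝓝 c⁻¹) :=
      hrhoT.comp (tendsto_atTop_add_const_right _ (-k) hNat)
    have t3 : Tendsto (fun N : ℕ => rho (Q ^ 2) ((N : ℤ) + k + 1)) atTop (𝓝 c⁻¹) := by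
      simp only [add_assoc]
      exact hrhoT.comp (tendsto_atTop_add_const_right _ (k + 1) hNat)
    have := (t1.mul t2).mul t3
    rwa [mul_inv_cancel₀ hc.ne', one_mul] at this
  have hb1 : ∀ N k, |qBin (Q ^ 2) N k| ≤ c⁻¹ * c⁻¹ := by
    intro N k
    have hP1 : qP (Q ^ 2) (2 * N + 1) ≤ 1 := by
      simpa [qP] using qP_antitone hq0 hq1 (Nat.zero_le (2 * N + 1))
    have hP0 := (qP_pos hq0 hq1 (2 * N + 1)).le
    unfold qBin
    rw [abs_of_nonneg (mul_nonneg (mul_nonneg hP0 (hrho0 _)) (hrho0 _))]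
    refine mul_le_mul ?_ (hrho1 _) (hrho0 _) (inv_nonneg.2 hc.le)
    calc _ ≤ 1 * c⁻¹ := mul_le_mul hP1 (hrho1 _) (hrho0 _) zero_le_one
      _ = c⁻¹ := one_mul _
  have hsN : Summable fun n : ℕ => Q ^ (n * (n + 1)) := by
    refine (summable_geometric_of_lt_one h0.le h1).of_nonneg_of_le (fun n => by positivity)
      fun n => pow_le_pow_of_le_one h0.le h1.le (by nlinarith)
  have e1 : ∀ n : ℕ, Q ^ ((n : ℤ) * ((n : ℤ) + 1)) = Q ^ (n * (n + 1)) := by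
    intro n; exact_mod_cast zpow_natCast Q (n * (n + 1))
  have e2 : ∀ n : ℕ, Q ^ ((-((n : ℤ) + 1)) * (-((n : ℤ) + 1) + 1)) = Q ^ (n * (n + 1)) := by
    intro n; rw [← e1]; congr 1; ring
  have hsZ : Summable fun k : ℤ => Q ^ (k * (k + 1)) :=
    Summable.of_nat_of_neg_add_one (by simpa only [e1] using hsN) (by simpa only [e2] using hsN)
  have hT : Tendsto (fun N => 2 * cos φ * tripleProd (Q ^ 2) φ N) atTop
      (𝓝 (∑' k : ℤ, c⁻¹ * Q ^ (k * (k + 1)) * cos ((2 * k + 1) * φ))) := by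
    have := tendsto_tsum_of_dominated_convergence (𝓕 := atTop)
      (f := fun N (k : ℤ) => qBin (Q ^ 2) N k * Q ^ (k * (k + 1)) * cos ((2 * k + 1) * φ))
      (g := fun k : ℤ => c⁻¹ * Q ^ (k * (k + 1)) * cos ((2 * k + 1) * φ))
      (bound := fun k : ℤ => c⁻¹ * c⁻¹ * Q ^ (k * (k + 1))) (hsZ.mul_left _)
      (fun k => ((hbT k).mul_const _).mul_const _)
      (Eventually.of_forall fun N k => ?_)
    · refine this.congr fun N => (hasSum_finite_triple h0 h1 φ N).1.tsum_eq
    · have hp : 0 < Q ^ (k * (k + 1)) := zpow_pos h0 _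
      rw [Real.norm_eq_abs, abs_mul, abs_mul, abs_of_pos hp]
      calc _ ≤ c⁻¹ * c⁻¹ * Q ^ (k * (k + 1)) * 1 :=
            mul_le_mul (mul_le_mul_of_nonneg_right (hb1 N k) hp.le) (abs_cos_le_one _)
              (abs_nonneg _) (by positivity)
        _ = _ := mul_one _
  have hsC : Summable fun n : ℕ => Q ^ (n * (n + 1)) * cos ((2 * n + 1) * φ) := by
    refine hsN.of_norm_bounded fun n => ?_
    rw [norm_mul, Real.norm_eq_abs, abs_of_pos (by positivity), Real.norm_eq_abs]
    exact mul_le_of_le_one_right (by positivity) (abs_cos_le_one _)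
  have hsum := hsC.hasSum
  set G := ∑' n : ℕ, Q ^ (n * (n + 1)) * cos ((2 * n + 1) * φ)
  have hZ : HasSum (fun k : ℤ => c⁻¹ * Q ^ (k * (k + 1)) * cos ((2 * k + 1) * φ))
      (c⁻¹ * G + c⁻¹ * G) := by
    refine HasSum.of_nat_of_neg_add_one ((hsum.mul_left c⁻¹).of_eq (fun n => ?_) rfl)
      ((hsum.mul_left c⁻¹).of_eq (fun n => ?_) rfl)
    · rw [e1]; push_cast; ring
    · rw [e2, show (2 * ((-((n : ℤ) + 1) : ℤ) : ℝ) + 1) * φ = -((2 * n + 1) * φ) by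
        push_cast; ring, cos_neg]; ring
  rw [hZ.tsum_eq] at hT
  have := hT.const_mul (c / 2)
  convert this using 1
  · ext N; ring
  · congr 1; field_simp; ring

/-- A strong monotonicity of the theta series on `[0, π/2]`: it still decreases after subtracting a
multiple of `cos`. This is read off from the product formula, whose factors other than `cos` are
decreasing and bounded below. -/
lemma theta_antitone {Q : ℝ} (h0 : 0 < Q) (h1 : Q < 1) :
    ∃ c, 0 < c ∧ AntitoneOn
      (fun φ => (∑' n : ℕ, Q ^ (n * (n + 1)) * cos ((2 * n + 1) * φ)) - c * cos φ)
      (Icc 0 (π / 2)) := by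
  have hq0 : 0 < Q ^ 2 := by positivity
  have hq1 : Q ^ 2 < 1 := pow_lt_one₀ h0.le h1 two_ne_zero
  obtain ⟨c, hc, hle, hT⟩ := triple_limit h0 h1
  refine ⟨c * c ^ 2, by positivity, fun φ hφ ψ hψ h => ?_⟩
  have hlim := ((hT φ).sub_const (c * c ^ 2 * cos φ))
  have hlim2 := ((hT ψ).sub_const (c * c ^ 2 * cos ψ))
  refine le_of_tendsto_of_tendsto' hlim2 hlim fun N => ?_
  have a1 : c ^ 2 ≤ tripleProd (Q ^ 2) φ N :=
    le_trans (pow_le_pow_left₀ hc.le (hle N) 2) (tripleProd_lower hq0 hq1 N)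
  have a2 := tripleProd_anti hq0 hφ.1 h hψ.2 N
  have a3 : cos ψ ≤ cos φ := cos_le_cos_of_nonneg_of_le_pi hφ.1 (by linarith [hψ.2, pi_pos]) h
  have a4 : 0 ≤ cos ψ := cos_nonneg_of_mem_Icc ⟨by linarith [hψ.1, pi_pos], hψ.2⟩
  have : cos ψ * tripleProd (Q ^ 2) ψ N - c ^ 2 * cos ψ
      ≤ cos φ * tripleProd (Q ^ 2) φ N - c ^ 2 * cos φ := by nlinarith
  nlinarith

/-! ### Trigonometric series in `e^t` -/

/-- The frequency `mₙ` as a real number. -/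
noncomputable def fr (n : ℕ) : ℝ := (mIdx n : ℝ)

lemma fr_eq (n : ℕ) : fr n = 4 * n + 2 := by simp [fr, mIdx]

lemma fr_ge (n : ℕ) : 2 ≤ fr n := by rw [fr_eq]; have := n.cast_nonneg (α := ℝ); linarith

lemma fr_pos (n : ℕ) : 0 < fr n := by linarith [fr_ge n]

lemma fr_sq_pos (n : ℕ) : 0 < fr n ^ 2 - 1 := by nlinarith [fr_ge n]

/-- The sine series `∑ aₙ e^{mₙ² t} sin (mₙ θ)`; for `t < 0` it solves `∂_t = -∂_θ²`.
The variable `t` stands for `log r`. -/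
noncomputable def heatS (a : ℕ → ℝ) (t θ : ℝ) : ℝ :=
  ∑' n, a n * exp (fr n ^ 2 * t) * sin (fr n * θ)

/-- The cosine series `∑ aₙ e^{mₙ² t} cos (mₙ θ)`. -/
noncomputable def heatC (a : ℕ → ℝ) (t θ : ℝ) : ℝ :=
  ∑' n, a n * exp (fr n ^ 2 * t) * cos (fr n * θ)

/-- Coefficients for which the series `heatS`, `heatC` converge absolutely for all `t < 0`. -/
def Adm (a : ℕ → ℝ) : Prop := ∀ t < 0, Summable fun n => |a n| * exp (fr n ^ 2 * t)

lemma adm_one : Adm fun _ => 1 := by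
  intro t ht
  have h1 : exp t < 1 := by simpa using exp_lt_exp.2 ht
  refine (summable_geometric_of_lt_one (exp_pos t).le h1).of_nonneg_of_le
    (fun n => by positivity) fun n => ?_
  rw [abs_one, one_mul, ← exp_nat_mul]
  refine exp_le_exp.2 ?_
  have : (n : ℝ) ≤ fr n ^ 2 := by
    rw [fr_eq]; have := n.cast_nonneg (α := ℝ); nlinarith
  nlinarith

lemma Adm.of_le {a b : ℕ → ℝ} (hb : Adm b) (C : ℝ) (h : ∀ n, |a n| ≤ C * |b n|) : Adm a := by
  intro t ht
  refine ((hb t ht).mul_left C).of_nonneg_of_le (fun n => by positivity) fun n => ?_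
  have := exp_pos (fr n ^ 2 * t)
  nlinarith [h n]

lemma Adm.fr_mul {a : ℕ → ℝ} (ha : Adm a) : Adm fun n => fr n * a n := by
  intro t ht
  have h2 := (ha (t / 2) (by linarith)).mul_left (2 / (-t))
  refine h2.of_nonneg_of_le (fun n => by positivity) fun n => ?_
  have hM := fr_ge n
  have e : exp (fr n ^ 2 * t) = exp (fr n ^ 2 * (t / 2)) * exp (fr n ^ 2 * (t / 2)) := by
    rw [← exp_add]; congr 1; ring
  have key : fr n * exp (fr n ^ 2 * (t / 2)) ≤ 2 / (-t) := by
    have h3 := add_one_le_exp (-(fr n ^ 2 * (t / 2)))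
    rw [exp_neg] at h3
    have hp := exp_pos (fr n ^ 2 * (t / 2))
    have h4 : (-(fr n ^ 2 * (t / 2))) * exp (fr n ^ 2 * (t / 2)) ≤ 1 := by
      calc _ ≤ (exp (fr n ^ 2 * (t / 2)))⁻¹ * exp (fr n ^ 2 * (t / 2)) :=
            mul_le_mul_of_nonneg_right (by linarith) hp.le
        _ = 1 := inv_mul_cancel₀ hp.ne'
    rw [le_div_iff₀ (by linarith)]
    have h5 : fr n * exp (fr n ^ 2 * (t / 2)) ≤ fr n ^ 2 * exp (fr n ^ 2 * (t / 2)) :=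
      mul_le_mul_of_nonneg_right (by nlinarith) hp.le
    nlinarith
  rw [abs_mul, abs_of_pos (fr_pos n), e]
  have hp := exp_pos (fr n ^ 2 * (t / 2))
  calc fr n * |a n| * (exp (fr n ^ 2 * (t / 2)) * exp (fr n ^ 2 * (t / 2)))
      = (fr n * exp (fr n ^ 2 * (t / 2))) * (|a n| * exp (fr n ^ 2 * (t / 2))) := by ring
    _ ≤ _ := mul_le_mul_of_nonneg_right key (by positivity)

lemma Adm.fr_sq_mul {a : ℕ → ℝ} (ha : Adm a) : Adm fun n => fr n ^ 2 * a n := by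
  have := ha.fr_mul.fr_mul
  simpa only [← mul_assoc, ← sq] using this

lemma Adm.summable_sin {a : ℕ → ℝ} (ha : Adm a) {t : ℝ} (ht : t < 0) (δ : ℕ → ℝ) :
    Summable fun n => a n * exp (fr n ^ 2 * t) * sin (δ n) := by
  refine (ha t ht).of_norm_bounded fun n => ?_
  rw [norm_mul, norm_mul, Real.norm_eq_abs, Real.norm_eq_abs, Real.norm_eq_abs, abs_exp]
  exact mul_le_of_le_one_right (by positivity) (abs_sin_le_one _)

lemma Adm.summable_cos {a : ℕ → ℝ} (ha : Adm a) {t : ℝ} (ht : t < 0) (δ : ℕ → ℝ) :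
    Summable fun n => a n * exp (fr n ^ 2 * t) * cos (δ n) := by
  refine (ha t ht).of_norm_bounded fun n => ?_
  rw [norm_mul, norm_mul, Real.norm_eq_abs, Real.norm_eq_abs, Real.norm_eq_abs, abs_exp]
  exact mul_le_of_le_one_right (by positivity) (abs_cos_le_one _)

/-- Termwise differentiation, with a phase `δ` so that sine and cosine series are treated at once. -/
lemma hasFDerivAt_phase {a : ℕ → ℝ} (ha : Adm a) (δ : ℝ) {z : ℝ × ℝ} (hz : z.1 < 0) :
    HasFDerivAt (fun z : ℝ × ℝ => ∑' n, a n * exp (fr n ^ 2 * z.1) * sin (fr n * z.2 + δ))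
      ((∑' n, fr n ^ 2 * a n * exp (fr n ^ 2 * z.1) * sin (fr n * z.2 + δ)) •
          ContinuousLinearMap.fst ℝ ℝ ℝ +
        (∑' n, fr n * a n * exp (fr n ^ 2 * z.1) * cos (fr n * z.2 + δ)) •
          ContinuousLinearMap.snd ℝ ℝ ℝ) z := by
  set τ := z.1 / 2 with hτ
  have hτ0 : τ < 0 := by linarith
  have hzτ : z.1 < τ := by linarith
  let f' : ℕ → ℝ × ℝ → (ℝ × ℝ →L[ℝ] ℝ) := fun n z =>
    (fr n ^ 2 * a n * exp (fr n ^ 2 * z.1) * sin (fr n * z.2 + δ)) •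
          ContinuousLinearMap.fst ℝ ℝ ℝ +
        (fr n * a n * exp (fr n ^ 2 * z.1) * cos (fr n * z.2 + δ)) •
          ContinuousLinearMap.snd ℝ ℝ ℝ
  have hopen : IsOpen {z : ℝ × ℝ | z.1 < τ} := isOpen_lt continuous_fst continuous_const
  have hconv : IsPreconnected {z : ℝ × ℝ | z.1 < τ} :=
    ((convex_Iio τ).linear_preimage (LinearMap.fst ℝ ℝ ℝ)).isPreconnected
  have main := hasFDerivAt_tsum_of_isPreconnected (𝕜 := ℝ)
    (f := fun n (z : ℝ × ℝ) => a n * exp (fr n ^ 2 * z.1) * sin (fr n * z.2 + δ)) (f' := f')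
    (u := fun n => |fr n ^ 2 * a n| * exp (fr n ^ 2 * τ) + |fr n * a n| * exp (fr n ^ 2 * τ))
    ((ha.fr_sq_mul τ hτ0).add (ha.fr_mul τ hτ0)) hopen hconv (x₀ := z) (x := z)
    (fun n x _ => ?_) (fun n x hx => ?_) hzτ (ha.summable_sin hz _) hzτ
  · refine main.congr_fderiv ?_
    have s1 := (ha.fr_sq_mul.summable_sin hz fun n => fr n * z.2 + δ).hasSum.smul_const
      (ContinuousLinearMap.fst ℝ ℝ ℝ)
    have s2 := (ha.fr_mul.summable_cos hz fun n => fr n * z.2 + δ).hasSum.smul_const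
      (ContinuousLinearMap.snd ℝ ℝ ℝ)
    exact (s1.add s2).tsum_eq
  · have h1 : HasFDerivAt (fun z : ℝ × ℝ => exp (fr n ^ 2 * z.1))
        (exp (fr n ^ 2 * x.1) • (fr n ^ 2 • ContinuousLinearMap.fst ℝ ℝ ℝ)) x :=
      (hasFDerivAt_fst.const_mul (fr n ^ 2)).exp
    have h2 : HasFDerivAt (fun z : ℝ × ℝ => sin (fr n * z.2 + δ))
        (cos (fr n * x.2 + δ) • (fr n • ContinuousLinearMap.snd ℝ ℝ ℝ)) x :=
      ((hasFDerivAt_snd.const_mul (fr n)).add_const δ).sin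
    refine ((h1.const_mul (a n)).mul h2).congr_fderiv ?_
    ext <;> simp [f'] <;> ring
  · have e1 : exp (fr n ^ 2 * x.1) ≤ exp (fr n ^ 2 * τ) := by
      refine exp_le_exp.2 (mul_le_mul_of_nonneg_left (le_of_lt hx) (sq_nonneg _))
    refine (norm_add_le _ _).trans (add_le_add ?_ ?_)
    · rw [norm_smul, Real.norm_eq_abs, abs_mul, abs_mul _ (exp _), abs_exp]
      calc |fr n ^ 2 * a n| * exp (fr n ^ 2 * x.1) * |sin (fr n * x.2 + δ)|
            * ‖ContinuousLinearMap.fst ℝ ℝ ℝ‖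
          ≤ |fr n ^ 2 * a n| * exp (fr n ^ 2 * τ) * 1 * 1 := by
            gcongr
            · exact abs_sin_le_one _
            · exact ContinuousLinearMap.norm_fst_le ..
        _ = _ := by ring
    · rw [norm_smul, Real.norm_eq_abs, abs_mul, abs_mul _ (exp _), abs_exp]
      calc |fr n * a n| * exp (fr n ^ 2 * x.1) * |cos (fr n * x.2 + δ)|
            * ‖ContinuousLinearMap.snd ℝ ℝ ℝ‖
          ≤ |fr n * a n| * exp (fr n ^ 2 * τ) * 1 * 1 := by
            gcongr
            · exact abs_cos_le_one _
            · exact ContinuousLinearMap.norm_snd_le ..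
        _ = _ := by ring

lemma hasFDerivAt_heatS {a : ℕ → ℝ} (ha : Adm a) {z : ℝ × ℝ} (hz : z.1 < 0) :
    HasFDerivAt (fun z : ℝ × ℝ => heatS a z.1 z.2)
      (heatS (fun n => fr n ^ 2 * a n) z.1 z.2 • ContinuousLinearMap.fst ℝ ℝ ℝ +
        heatC (fun n => fr n * a n) z.1 z.2 • ContinuousLinearMap.snd ℝ ℝ ℝ) z := by
  simpa only [heatS, heatC, add_zero] using hasFDerivAt_phase ha 0 hz

lemma hasFDerivAt_heatC {a : ℕ → ℝ} (ha : Adm a) {z : ℝ × ℝ} (hz : z.1 < 0) :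
    HasFDerivAt (fun z : ℝ × ℝ => heatC a z.1 z.2)
      (heatC (fun n => fr n ^ 2 * a n) z.1 z.2 • ContinuousLinearMap.fst ℝ ℝ ℝ +
        (-heatS (fun n => fr n * a n) z.1 z.2) • ContinuousLinearMap.snd ℝ ℝ ℝ) z := by
  simpa only [heatS, heatC, sin_add_pi_div_two, cos_add_pi_div_two, mul_neg, tsum_neg] using
    hasFDerivAt_phase ha (π / 2) hz

lemma hasDerivAt_line (t k θ s h : ℝ) :
    HasDerivAt (fun h : ℝ => ((t + k * h, θ + s * h) : ℝ × ℝ)) (k, s) h := by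
  have h1 : HasDerivAt (fun h : ℝ => t + k * h) k h := by
    simpa using ((hasDerivAt_id h).const_mul k).const_add t
  have h2 : HasDerivAt (fun h : ℝ => θ + s * h) s h := by
    simpa using ((hasDerivAt_id h).const_mul s).const_add θ
  exact h1.prodMk h2

lemma heatS_line {a : ℕ → ℝ} (ha : Adm a) {t k θ s h : ℝ} (ht : t + k * h < 0) :
    HasDerivAt (fun h => heatS a (t + k * h) (θ + s * h))
      (k * heatS (fun n => fr n ^ 2 * a n) (t + k * h) (θ + s * h) +
        s * heatC (fun n => fr n * a n) (t + k * h) (θ + s * h)) h := by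
  have := (hasFDerivAt_heatS ha (z := (t + k * h, θ + s * h)) ht).comp_hasDerivAt h
    (hasDerivAt_line t k θ s h)
  refine this.congr_deriv ?_
  simp; ring

lemma heatC_line {a : ℕ → ℝ} (ha : Adm a) {t k θ s h : ℝ} (ht : t + k * h < 0) :
    HasDerivAt (fun h => heatC a (t + k * h) (θ + s * h))
      (k * heatC (fun n => fr n ^ 2 * a n) (t + k * h) (θ + s * h) -
        s * heatS (fun n => fr n * a n) (t + k * h) (θ + s * h)) h := by
  have := (hasFDerivAt_heatC ha (z := (t + k * h, θ + s * h)) ht).comp_hasDerivAt h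
    (hasDerivAt_line t k θ s h)
  refine this.congr_deriv ?_
  simp; ring

lemma heatS_dt {a : ℕ → ℝ} (ha : Adm a) {t θ : ℝ} (ht : t < 0) :
    HasDerivAt (fun t => heatS a t θ) (heatS (fun n => fr n ^ 2 * a n) t θ) t := by
  simpa using heatS_line ha (t := 0) (k := 1) (θ := θ) (s := 0) (h := t) (by linarith)

lemma heatS_dθ {a : ℕ → ℝ} (ha : Adm a) {t θ : ℝ} (ht : t < 0) :
    HasDerivAt (fun θ => heatS a t θ) (heatC (fun n => fr n * a n) t θ) θ := by
  simpa using heatS_line ha (t := t) (k := 0) (θ := 0) (s := 1) (h := θ) (by linarith)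

lemma heatC_dθ {a : ℕ → ℝ} (ha : Adm a) {t θ : ℝ} (ht : t < 0) :
    HasDerivAt (fun θ => heatC a t θ) (-heatS (fun n => fr n * a n) t θ) θ := by
  simpa using heatC_line ha (t := t) (k := 0) (θ := 0) (s := 1) (h := θ) (by linarith)

lemma sin_fr_reflect (n : ℕ) (θ : ℝ) : sin (fr n * (π / 2 - θ)) = sin (fr n * θ) := by
  rw [fr_eq, show (4 * (n : ℝ) + 2) * (π / 2 - θ) = (π - (4 * n + 2) * θ) + n * (2 * π) by ring,
    sin_add_nat_mul_two_pi, sin_pi_sub]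

lemma cos_fr_reflect (n : ℕ) (θ : ℝ) : cos (fr n * (π / 2 - θ)) = -cos (fr n * θ) := by
  rw [fr_eq, show (4 * (n : ℝ) + 2) * (π / 2 - θ) = (π - (4 * n + 2) * θ) + n * (2 * π) by ring,
    cos_add_nat_mul_two_pi, cos_pi_sub]

lemma heatS_reflect (a : ℕ → ℝ) (t θ : ℝ) : heatS a t (π / 2 - θ) = heatS a t θ := by
  simp only [heatS, sin_fr_reflect]

lemma heatC_reflect (a : ℕ → ℝ) (t θ : ℝ) : heatC a t (π / 2 - θ) = -heatC a t θ := by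
  simp only [heatC, cos_fr_reflect, mul_neg, tsum_neg]

/-- Reflection in `θ = π / 4` changes the sign of a cosine series. -/
lemma heatC_quarter (a : ℕ → ℝ) (t : ℝ) : heatC a t (π / 4) = 0 := by
  have := heatC_reflect a t (π / 4)
  rw [show π / 2 - π / 4 = π / 4 by ring] at this
  linarith

lemma heatS_zero (a : ℕ → ℝ) (t : ℝ) : heatS a t 0 = 0 := by simp [heatS]

lemma heatS_add {a b : ℕ → ℝ} (ha : Adm a) (hb : Adm b) {t θ : ℝ} (ht : t < 0) :
    heatS (fun n => a n + b n) t θ = heatS a t θ + heatS b t θ := by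
  simp only [heatS, add_mul]
  exact (ha.summable_sin ht _).tsum_add (hb.summable_sin ht _)

lemma heatC_add {a b : ℕ → ℝ} (ha : Adm a) (hb : Adm b) {t θ : ℝ} (ht : t < 0) :
    heatC (fun n => a n + b n) t θ = heatC a t θ + heatC b t θ := by
  simp only [heatC, add_mul]
  exact (ha.summable_cos ht _).tsum_add (hb.summable_cos ht _)

/-! ### The series of `W` and the square wave -/

/-- The coefficients of `W`. -/
noncomputable def cA (n : ℕ) : ℝ := 8 / π / ((fr n ^ 2 - 1) * fr n)

/-- `W` in the variable `t = log r`. -/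
noncomputable def Tf (t θ : ℝ) : ℝ := heatS cA t θ
/-- The derivative `∂_t` of `Tf`. -/
noncomputable def Tt (t θ : ℝ) : ℝ := heatS (fun n => fr n ^ 2 * cA n) t θ
/-- The derivative `∂_θ` of `Tf`. -/
noncomputable def Tθ (t θ : ℝ) : ℝ := heatC (fun n => fr n * cA n) t θ
/-- The square-wave series `(8/π) ∑ e^{mₙ² t} sin (mₙ θ) / mₙ`, equal to `∂_t Tf - Tf`. -/
noncomputable def Sf (t θ : ℝ) : ℝ := heatS (fun n => 8 / π / fr n) t θ
/-- The derivative `∂_θ` of `Sf`, a Jacobi theta function. -/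
noncomputable def Gf (t θ : ℝ) : ℝ := heatC (fun _ => 8 / π) t θ
/-- The derivative `∂_t` of `Sf`. -/
noncomputable def Hf (t θ : ℝ) : ℝ := heatS (fun n => fr n * (8 / π)) t θ
/-- A primitive of `Sf` in `θ`. -/
noncomputable def Uf (t θ : ℝ) : ℝ := heatC (fun n => -(8 / π / fr n ^ 2)) t θ

lemma adm_const (c : ℝ) : Adm fun _ => c :=
  adm_one.of_le |c| fun n => by simp

lemma adm_inv {b : ℕ → ℝ} (hb : ∀ n, 1 ≤ b n) : Adm fun n => 8 / π / b n := by
  refine adm_one.of_le (8 / π) fun n => ?_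
  have h0 : 0 < b n := lt_of_lt_of_le one_pos (hb n)
  rw [abs_of_pos (by positivity), abs_one, mul_one]
  exact div_le_self (by positivity) (hb n)

lemma adm_cA : Adm cA := adm_inv fun n => by nlinarith [fr_ge n]
lemma adm_S : Adm fun n => 8 / π / fr n := adm_inv fun n => by nlinarith [fr_ge n]
lemma adm_U : Adm fun n => -(8 / π / fr n ^ 2) :=
  (adm_inv (b := fun n => fr n ^ 2) fun n => by nlinarith [fr_ge n]).of_le 1 fun n => by simp

lemma Tt_eq {t : ℝ} (ht : t < 0) (θ : ℝ) : Tt t θ = Tf t θ + Sf t θ := by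
  rw [Tt, Tf, Sf, ← heatS_add adm_cA adm_S ht]
  congr 1; funext n
  have := fr_sq_pos n; have := fr_pos n
  rw [cA]; field_simp; ring

lemma Tf_line {t k θ s h : ℝ} (ht : t + k * h < 0) :
    HasDerivAt (fun h => Tf (t + k * h) (θ + s * h))
      (k * Tt (t + k * h) (θ + s * h) + s * Tθ (t + k * h) (θ + s * h)) h :=
  heatS_line adm_cA ht

lemma Ttt_eq {t : ℝ} (ht : t < 0) (θ : ℝ) :
    heatS (fun n => fr n ^ 2 * (fr n ^ 2 * cA n)) t θ = Tt t θ + Hf t θ := by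
  rw [Tt, Hf, ← heatS_add adm_cA.fr_sq_mul (adm_const _).fr_mul ht]
  congr 1; funext n
  have := fr_sq_pos n; have := fr_pos n
  rw [cA]; field_simp; ring

lemma Ttθ_eq {t : ℝ} (ht : t < 0) (θ : ℝ) :
    heatC (fun n => fr n * (fr n ^ 2 * cA n)) t θ = Tθ t θ + Gf t θ := by
  rw [Tθ, Gf, ← heatC_add adm_cA.fr_mul (adm_const _) ht]
  congr 1; funext n
  have := fr_sq_pos n; have := fr_pos n
  rw [cA]; field_simp; ring

lemma Tt_line {t k θ s h : ℝ} (ht : t + k * h < 0) :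
    HasDerivAt (fun h => Tt (t + k * h) (θ + s * h))
      (k * (Tt (t + k * h) (θ + s * h) + Hf (t + k * h) (θ + s * h)) +
        s * (Tθ (t + k * h) (θ + s * h) + Gf (t + k * h) (θ + s * h))) h := by
  rw [← Ttt_eq ht, ← Ttθ_eq ht]
  exact heatS_line adm_cA.fr_sq_mul ht

lemma Tθ_line {t k θ s h : ℝ} (ht : t + k * h < 0) :
    HasDerivAt (fun h => Tθ (t + k * h) (θ + s * h))
      (k * (Tθ (t + k * h) (θ + s * h) + Gf (t + k * h) (θ + s * h)) -
        s * Tt (t + k * h) (θ + s * h)) h := by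
  rw [← Ttθ_eq ht]
  have := heatC_line adm_cA.fr_mul (t := t) (k := k) (θ := θ) (s := s) (h := h) ht
  simp only [show ∀ n, fr n ^ 2 * (fr n * cA n) = fr n * (fr n ^ 2 * cA n) from fun n => by ring,
    show ∀ n, fr n * (fr n * cA n) = fr n ^ 2 * cA n from fun n => by ring] at this
  exact this

lemma Sf_dt {t θ : ℝ} (ht : t < 0) : HasDerivAt (fun t => Sf t θ) (Hf t θ) t := by
  refine (heatS_dt adm_S ht).congr_deriv ?_
  rw [Hf]; congr 1; funext n; have := fr_pos n; field_simp

lemma Sf_dθ {t θ : ℝ} (ht : t < 0) : HasDerivAt (fun θ => Sf t θ) (Gf t θ) θ := by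
  refine (heatS_dθ adm_S ht).congr_deriv ?_
  rw [Gf]; congr 1; funext n; have := fr_pos n; field_simp

lemma Gf_dθ {t θ : ℝ} (ht : t < 0) : HasDerivAt (fun θ => Gf t θ) (-Hf t θ) θ :=
  heatC_dθ (adm_const _) ht

lemma Uf_dθ {t θ : ℝ} (ht : t < 0) : HasDerivAt (fun θ => Uf t θ) (Sf t θ) θ := by
  refine (heatC_dθ adm_U ht).congr_deriv ?_
  rw [Sf, heatS, heatS, ← tsum_neg]
  congr 1; funext n; have := fr_pos n; field_simp

/-! ### Signs of the theta functions -/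

/-- `Gf` as the theta series of `theta_antitone`, with `Q = e^{16t}` and `φ = 2θ`. -/
lemma Gf_theta (t θ : ℝ) : Gf t θ = 8 / π * exp (4 * t) *
    ∑' n : ℕ, exp (16 * t) ^ (n * (n + 1)) * cos ((2 * n + 1) * (2 * θ)) := by
  rw [Gf, heatC, ← tsum_mul_left]
  congr 1; funext n
  rw [← exp_nat_mul, fr_eq, show (4 * (n : ℝ) + 2) ^ 2 * t =
    4 * t + ((n * (n + 1) : ℕ) : ℝ) * (16 * t) by push_cast; ring, exp_add,
    show (4 * (n : ℝ) + 2) * θ = (2 * n + 1) * (2 * θ) by ring]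
  ring

lemma Gf_antitone {t : ℝ} (ht : t < 0) :
    ∃ c, 0 < c ∧ AntitoneOn (fun θ => Gf t θ - c * cos (2 * θ)) (Icc 0 (π / 4)) := by
  obtain ⟨c, hc, h⟩ := theta_antitone (exp_pos (16 * t))
    (by simpa using exp_lt_exp.2 (show 16 * t < 0 by linarith))
  refine ⟨8 / π * exp (4 * t) * c, by positivity, fun a ha b hb hab => ?_⟩
  have := h (a := 2 * a) (b := 2 * b) ⟨by linarith [ha.1], by linarith [ha.2]⟩
    ⟨by linarith [hb.1], by linarith [hb.2]⟩ (by linarith)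
  have hp : 0 < 8 / π * exp (4 * t) := by positivity
  simp only [Gf_theta]
  have := mul_le_mul_of_nonneg_left this hp.le
  simp only [mul_sub] at this
  simpa only [mul_assoc] using this

lemma Gf_quarter (t : ℝ) : Gf t (π / 4) = 0 := heatC_quarter _ t

lemma Gf_pos {t θ : ℝ} (ht : t < 0) (h0 : 0 ≤ θ) (h1 : θ < π / 4) : 0 < Gf t θ := by
  obtain ⟨c, hc, h⟩ := Gf_antitone ht
  have := h ⟨h0, h1.le⟩ ⟨by linarith [pi_pos], le_rfl⟩ h1.le
  simp only [Gf_quarter, show 2 * (π / 4) = π / 2 by ring, cos_pi_div_two] at this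
  have h3 : 0 < cos (2 * θ) := cos_pos_of_mem_Ioo ⟨by linarith [pi_pos], by linarith⟩
  nlinarith [mul_pos hc h3]

lemma Gf_neg {t θ : ℝ} (ht : t < 0) (h0 : π / 4 < θ) (h1 : θ ≤ π / 2) : Gf t θ < 0 := by
  have h := heatC_reflect (fun _ => 8 / π) t θ
  have h' : 0 < Gf t (π / 2 - θ) := Gf_pos ht (by linarith) (by linarith)
  rw [Gf] at h' ⊢; linarith

lemma Hf_pos {t θ : ℝ} (ht : t < 0) (h0 : 0 < θ) (h1 : θ < π / 2) : 0 < Hf t θ := by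
  obtain ⟨c, hc, h⟩ := Gf_antitone ht
  have half : ∀ θ, 0 < θ → θ ≤ π / 4 → 0 < Hf t θ := by
    intro θ h0 h1
    have hd : HasDerivAt (fun θ => Gf t θ - c * cos (2 * θ))
        (-Hf t θ - c * (-sin (2 * θ) * 2)) θ := by
      refine (Gf_dθ ht).sub (HasDerivAt.const_mul c ?_)
      simpa using ((hasDerivAt_id θ).const_mul 2).cos
    have hle := h.derivWithin_nonpos (x := θ)
    rw [hd.hasDerivWithinAt.derivWithin
      (uniqueDiffOn_Icc (by positivity) θ ⟨h0.le, h1⟩)] at hle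
    have hs : 0 < sin (2 * θ) := sin_pos_of_pos_of_lt_pi (by linarith) (by linarith [pi_pos])
    nlinarith [mul_pos hc hs]
  rcases le_or_gt θ (π / 4) with h2 | h2
  · exact half θ h0 h2
  · rw [Hf, ← heatS_reflect]
    exact half _ (by linarith) (by linarith)

/-! ### Series up to the boundary -/

/-- The series `∑ bₙ r^{mₙ²} sin (mₙ θ + δ)`; the phase `δ` is `0` or `π / 2`. Unlike `heatS` and
`heatC` it includes the endpoint `r = 0`. -/
noncomputable def powSer (b : ℕ → ℝ) (δ r θ : ℝ) : ℝ :=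
  ∑' n, b n * r ^ (mIdx n ^ 2) * sin (fr n * θ + δ)

lemma exp_pow_mIdx (n : ℕ) (t : ℝ) : exp t ^ (mIdx n ^ 2) = exp (fr n ^ 2 * t) := by
  rw [← exp_nat_mul, fr]; push_cast; rfl

lemma powSer_exp_zero (b : ℕ → ℝ) (t θ : ℝ) : powSer b 0 (exp t) θ = heatS b t θ := by
  simp only [powSer, heatS, exp_pow_mIdx, add_zero]

lemma powSer_exp_pi_div_two (b : ℕ → ℝ) (t θ : ℝ) :
    powSer b (π / 2) (exp t) θ = heatC b t θ := by
  simp only [powSer, heatC, exp_pow_mIdx, sin_add_pi_div_two]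

lemma powSer_norm_le (b : ℕ → ℝ) (δ θ : ℝ) {r : ℝ} (h0 : 0 ≤ r) (h1 : r ≤ 1) (n : ℕ) :
    ‖b n * r ^ (mIdx n ^ 2) * sin (fr n * θ + δ)‖ ≤ |b n| := by
  rw [norm_mul, norm_mul, Real.norm_eq_abs, Real.norm_eq_abs, Real.norm_eq_abs,
    abs_of_nonneg (pow_nonneg h0 _)]
  calc |b n| * r ^ (mIdx n ^ 2) * |sin (fr n * θ + δ)| ≤ |b n| * 1 * 1 := by
        gcongr
        · exact pow_le_one₀ h0 h1
        · exact abs_sin_le_one _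
    _ = _ := by ring

lemma powSer_continuousOn {b : ℕ → ℝ} (hb : Summable fun n => |b n|) (δ : ℝ) :
    ContinuousOn (fun z : ℝ × ℝ => powSer b δ z.1 z.2) (Icc 0 1 ×ˢ univ) := by
  refine continuousOn_tsum (fun n => ?_) hb fun n z hz => powSer_norm_le b δ _ hz.1.1 hz.1.2 n
  fun_prop

lemma powSer_summable {b : ℕ → ℝ} (hb : Summable fun n => |b n|) (δ θ : ℝ) {r : ℝ}
    (h0 : 0 ≤ r) (h1 : r ≤ 1) :
    Summable fun n => b n * r ^ (mIdx n ^ 2) * sin (fr n * θ + δ) :=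
  hb.of_norm_bounded fun n => powSer_norm_le b δ θ h0 h1 n

lemma powSer_hasDerivAt {b : ℕ → ℝ} (hb' : Summable fun n => |b n|)
    (hb : Summable fun n => |fr n * b n|) (δ θ : ℝ) {r : ℝ}
    (h0 : 0 ≤ r) (h1 : r ≤ 1) :
    HasDerivAt (fun θ => powSer b δ r θ) (powSer (fun n => fr n * b n) (δ + π / 2) r θ) θ := by
  refine hasDerivAt_tsum (y₀ := 0) (g := fun n θ => b n * r ^ (mIdx n ^ 2) * sin (fr n * θ + δ))
    (g' := fun n θ => fr n * b n * r ^ (mIdx n ^ 2) * sin (fr n * θ + (δ + π / 2)))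
    hb (fun n y => ?_)
    (fun n y => powSer_norm_le (fun n => fr n * b n) (δ + π / 2) y h0 h1 n)
    (powSer_summable hb' δ 0 h0 h1) θ
  have := ((((hasDerivAt_id y).const_mul (fr n)).add_const δ).sin).const_mul
    (b n * r ^ (mIdx n ^ 2))
  refine this.congr_deriv ?_
  rw [← add_assoc, sin_add_pi_div_two]; simp; ring

lemma summable_inv_aux {d : ℕ → ℝ} (hd : ∀ n : ℕ, ((n : ℝ) + 1) ^ 2 ≤ d n) :
    Summable fun n => |8 / π / d n| := by
  have h1 : Summable fun n : ℕ => 1 / ((n + 1 : ℕ) : ℝ) ^ 2 :=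
    (summable_nat_add_iff 1).2 (Real.summable_one_div_nat_pow.2 one_lt_two)
  refine (h1.mul_left (8 / π)).of_nonneg_of_le (fun n => abs_nonneg _) fun n => ?_
  have h2 : (0 : ℝ) < ((n : ℝ) + 1) ^ 2 := by positivity
  have h3 := hd n
  rw [abs_of_nonneg (div_nonneg (by positivity) (h2.le.trans h3)), div_eq_mul_one_div (8 / π)]
  refine mul_le_mul_of_nonneg_left ?_ (by positivity)
  push_cast
  exact one_div_le_one_div_of_le h2 h3

lemma fr_ge' (n : ℕ) : (n : ℝ) + 1 ≤ fr n - 1 := by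
  rw [fr_eq]; have := n.cast_nonneg (α := ℝ); linarith

lemma summable_U : Summable fun n => |8 / π / fr n ^ 2| :=
  summable_inv_aux fun n => by nlinarith [fr_ge' n, n.cast_nonneg (α := ℝ)]

lemma summable_cA : Summable fun n => |cA n| :=
  summable_inv_aux fun n => by
    have := fr_ge' n
    have := n.cast_nonneg (α := ℝ)
    have h : ((n : ℝ) + 1) ^ 2 ≤ fr n ^ 2 - 1 := by nlinarith
    nlinarith [fr_ge n, fr_sq_pos n]

lemma fr_mul_cA (n : ℕ) : fr n * cA n = 8 / π / (fr n ^ 2 - 1) := by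
  have := fr_sq_pos n; have := fr_pos n
  rw [cA]; field_simp

lemma summable_fr_cA : Summable fun n => |fr n * cA n| := by
  simp only [fr_mul_cA]
  exact summable_inv_aux fun n => by nlinarith [fr_ge' n, n.cast_nonneg (α := ℝ)]

lemma W_eq (r θ : ℝ) : W r θ = powSer cA 0 r θ := by
  rw [W, powSer, ← tsum_mul_left]
  congr 1; funext n
  rw [cA, add_zero]
  simp only [fr]
  ring

lemma W_exp (t θ : ℝ) : W (exp t) θ = Tf t θ := by rw [W_eq, powSer_exp_zero, Tf]

/-- The angular derivative `∂_θ W`, also for `r = 0` and `r = 1`. -/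
noncomputable def Wd (r θ : ℝ) : ℝ := powSer (fun n => fr n * cA n) (π / 2) r θ

lemma Wd_exp (t θ : ℝ) : Wd (exp t) θ = Tθ t θ := powSer_exp_pi_div_two _ _ _

lemma W_continuousOn : ContinuousOn (fun z : ℝ × ℝ => W z.1 z.2) (Icc 0 1 ×ˢ univ) := by
  simp only [W_eq]; exact powSer_continuousOn summable_cA 0

lemma Wd_continuousOn : ContinuousOn (fun z : ℝ × ℝ => Wd z.1 z.2) (Icc 0 1 ×ˢ univ) :=
  powSer_continuousOn summable_fr_cA _

lemma W_hasDerivAt {r : ℝ} (h0 : 0 ≤ r) (h1 : r ≤ 1) (θ : ℝ) :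
    HasDerivAt (fun θ => W r θ) (Wd r θ) θ := by
  simp only [W_eq]
  simpa [Wd] using powSer_hasDerivAt summable_cA summable_fr_cA 0 θ h0 h1

lemma W_ang_zero (r : ℝ) : W r 0 = 0 := by simp [W]

lemma W_ang_pi_div_two (r : ℝ) : W r (π / 2) = 0 := by
  have : ∀ n, sin ((mIdx n : ℝ) * (π / 2)) = 0 := fun n => by
    have := sin_fr_reflect n (π / 2)
    simpa [fr] using this.symm
  simp [W, this]

/-! ### Boundary values -/

/-- The Fourier series of the second Bernoulli polynomial. -/
lemma bernoulli_two_hasSum {x : ℝ} (hx : x ∈ Icc (0 : ℝ) 1) :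
    HasSum (fun n : ℕ => 1 / (n : ℝ) ^ 2 * cos (2 * π * n * x)) (π ^ 2 * (x ^ 2 - x + 1 / 6)) := by
  have h := hasSum_one_div_nat_pow_mul_cos (k := 1) one_ne_zero hx
  have hB : (Polynomial.map (algebraMap ℚ ℝ) (Polynomial.bernoulli 2)).eval x
      = x ^ 2 - x + 1 / 6 := by
    simp [Polynomial.bernoulli, Finset.sum_range_succ, bernoulli_eq_bernoulli'_of_ne_one,
      Nat.choose]
    ring
  have hc : (-1 : ℝ) ^ (1 + 1) * (2 * π) ^ 2 / 2 / (Nat.factorial 2 : ℝ) = π ^ 2 := by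
    norm_num [Nat.factorial]
    ring
  simp only [mul_one, hB, hc] at h
  exact h

/-- The Fourier series of the triangle wave: a quarter of the odd-indexed part of the series of the
second Bernoulli polynomial. -/
lemma triangle_hasSum {θ : ℝ} (h0 : 0 ≤ θ) (h1 : θ ≤ π / 2) :
    HasSum (fun n => 1 / fr n ^ 2 * cos (fr n * θ)) (π / 8 * (π / 4 - θ)) := by
  have hp := pi_ne_zero
  have hx : θ / π ≤ 1 / 2 := by rw [div_le_iff₀ pi_pos]; linarith
  have hx0 : 0 ≤ θ / π := div_nonneg h0 pi_pos.le
  have hall := bernoulli_two_hasSum (x := θ / π) ⟨hx0, by linarith⟩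
  have heven := (bernoulli_two_hasSum (x := 2 * (θ / π)) ⟨by linarith, by linarith⟩).mul_left
    (1 / 4)
  set f : ℕ → ℝ := fun n => 1 / (n : ℝ) ^ 2 * cos (2 * π * n * (θ / π)) with hf
  have i1 : Function.Injective fun k : ℕ => 2 * k := fun a b h => by simpa using h
  have i2 : Function.Injective fun k : ℕ => 2 * k + 1 := fun a b h => by simpa using h
  have s1 : Summable fun k => f (2 * k) := hall.summable.comp_injective i1
  have s2 : Summable fun k => f (2 * k + 1) := hall.summable.comp_injective i2
  have hsplit := tsum_even_add_odd s1 s2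
  have e : ∀ k, f (2 * k) = 1 / 4 * (1 / (k : ℝ) ^ 2 * cos (2 * π * k * (2 * (θ / π)))) := by
    intro k
    simp only [hf]
    push_cast
    rw [show 2 * π * (2 * (k : ℝ)) * (θ / π) = 2 * π * k * (2 * (θ / π)) by ring,
      show 1 / (2 * (k : ℝ)) ^ 2 = 1 / 4 * (1 / (k : ℝ) ^ 2) by
        rw [mul_pow, one_div_mul_one_div]; norm_num, mul_assoc]
  simp only [e] at hsplit
  rw [heven.tsum_eq, hall.tsum_eq] at hsplit
  have e2 : ∀ n, 1 / fr n ^ 2 * cos (fr n * θ) = 1 / 4 * f (2 * n + 1) := by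
    intro n
    simp only [hf]
    rw [fr_eq]
    push_cast
    rw [show 2 * π * (2 * (n : ℝ) + 1) * (θ / π) = (4 * n + 2) * θ by field_simp; ring,
      show 1 / (4 * (n : ℝ) + 2) ^ 2 = 1 / 4 * (1 / (2 * (n : ℝ) + 1) ^ 2) by
        rw [one_div_mul_one_div]; congr 1; ring, mul_assoc]
  simp only [e2]
  have h3 := eq_sub_of_add_eq' hsplit
  have hodd := s2.hasSum.mul_left (1 / 4)
  rw [h3] at hodd
  refine HasSum.of_eq hodd (fun _ => rfl) ?_
  field_simp; ring

/-- `Uf 0` has slope `1`: the boundary values of the square wave `Sf` are `1`, in integrated form. -/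
lemma Uf_zero {θ : ℝ} (h0 : 0 ≤ θ) (h1 : θ ≤ π / 2) :
    Uf 0 θ = θ - π / 4 := by
  have h := (triangle_hasSum h0 h1).mul_left (-(8 / π))
  rw [Uf, heatC]
  have e : (fun n => -(8 / π / fr n ^ 2) * exp (fr n ^ 2 * 0) * cos (fr n * θ)) =
      fun n => -(8 / π) * (1 / fr n ^ 2 * cos (fr n * θ)) := by
    funext n; simp; ring
  rw [e, h.tsum_eq]
  have := pi_ne_zero
  field_simp; ring

lemma Uf_tendsto (θ : ℝ) : Tendsto (fun t => Uf t θ) (𝓝[<] 0) (𝓝 (Uf 0 θ)) := by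
  have h : Summable fun n => |-(8 / π / fr n ^ 2)| := by simpa only [abs_neg] using summable_U
  have h1 : ContinuousOn (fun t => Uf t θ) (Iic 0) := by
    have := (powSer_continuousOn h (π / 2)).comp
      (f := fun t : ℝ => ((exp t, θ) : ℝ × ℝ)) (s := Iic 0) (by fun_prop)
      fun t ht => ⟨⟨(exp_pos t).le, by simpa using ht⟩, mem_univ _⟩
    simp only [Function.comp_def, powSer_exp_pi_div_two] at this
    exact this
  exact (h1 0 self_mem_Iic).mono_left (nhdsWithin_mono _ Iio_subset_Iic_self)

lemma Tf_tendsto (θ : ℝ) : Tendsto (fun t => Tf t θ) (𝓝[<] 0) (𝓝 (W 1 θ)) := by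
  have h1 : ContinuousOn (fun t => Tf t θ) (Iic 0) := by
    have := W_continuousOn.comp
      (f := fun t : ℝ => ((exp t, θ) : ℝ × ℝ)) (s := Iic 0) (by fun_prop)
      fun t ht => ⟨⟨(exp_pos t).le, by simpa using ht⟩, mem_univ _⟩
    simpa only [Function.comp_def, W_exp] using this
  have := (h1 0 self_mem_Iic).mono_left (nhdsWithin_mono _ Iio_subset_Iic_self)
  simpa only [← W_exp, exp_zero] using this

/-- On the arc `r = 1` the function `W - (cos θ + sin θ - 1)` solves `E'' = -E`, vanishes at `0` and
has a critical point at `π / 4`, hence is zero. -/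
lemma W_boundary {θ : ℝ} (h0 : 0 ≤ θ) (h1 : θ ≤ π / 2) :
    W 1 θ = cos θ + sin θ - 1 ∧ Wd 1 θ = cos θ - sin θ := by
  have hsK : Summable fun n => |cA n / fr n| := by
    refine summable_cA.of_nonneg_of_le (fun n => abs_nonneg _) fun n => ?_
    rw [abs_div, abs_of_pos (fr_pos n)]
    exact div_le_self (abs_nonneg _) (by linarith [fr_ge n])
  have hfK : (fun n => fr n * (cA n / fr n)) = cA := by
    funext n; have := fr_pos n; field_simp
  have hK : ∀ θ, HasDerivAt (fun θ => powSer (fun n => cA n / fr n) (π / 2) 1 θ) (-W 1 θ) θ := by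
    intro θ
    have := powSer_hasDerivAt hsK (by simpa only [fun n => congrFun hfK n] using summable_cA)
      (π / 2) θ zero_le_one le_rfl
    refine this.congr_deriv ?_
    rw [hfK, W_eq, powSer, powSer, ← tsum_neg]
    congr 1; funext n
    rw [show fr n * θ + (π / 2 + π / 2) = fr n * θ + π by ring, sin_add_pi, add_zero]; ring
  set K := fun θ => powSer (fun n => cA n / fr n) (π / 2) 1 θ with hKdef
  have hD : ∀ θ ∈ Icc 0 (π / 2), Wd 1 θ = K θ - (θ - π / 4) := by
    intro θ hθ
    have hUs : Summable fun n => |-(8 / π / fr n ^ 2)| := by simpa only [abs_neg] using summable_U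
    have h2 : Uf 0 θ = powSer (fun n => -(8 / π / fr n ^ 2)) (π / 2) 1 θ := by
      rw [← exp_zero, powSer_exp_pi_div_two, Uf]
    rw [← Uf_zero hθ.1 hθ.2, h2, hKdef]
    simp only [Wd, powSer]
    rw [← (powSer_summable hsK (π / 2) θ zero_le_one le_rfl).tsum_sub
      (powSer_summable hUs (π / 2) θ zero_le_one le_rfl)]
    congr 1; funext n
    have := fr_sq_pos n; have := fr_pos n
    rw [← sub_mul, ← sub_mul]
    congr 2
    rw [cA]; field_simp; ring
  have hE : ∀ θ, HasDerivAt (fun θ => W 1 θ - (cos θ + sin θ - 1)) (Wd 1 θ - (cos θ - sin θ)) θ := by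
    intro θ
    refine ((W_hasDerivAt zero_le_one le_rfl θ).sub
      (((hasDerivAt_cos θ).add (hasDerivAt_sin θ)).sub_const 1)).congr_deriv ?_
    ring
  have hDd : ∀ θ, HasDerivAt (fun θ => K θ - (θ - π / 4) - (cos θ - sin θ))
      (-(W 1 θ - (cos θ + sin θ - 1))) θ := by
    intro θ
    refine (((hK θ).sub ((hasDerivAt_id θ).sub_const (π / 4))).sub
      ((hasDerivAt_cos θ).sub (hasDerivAt_sin θ))).congr_deriv ?_
    ring
  set E := fun θ => W 1 θ - (cos θ + sin θ - 1) with hEdef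
  set D := fun θ => K θ - (θ - π / 4) - (cos θ - sin θ) with hDdef
  have hE' : ∀ θ ∈ Icc 0 (π / 2), HasDerivAt E (D θ) θ := fun θ hθ => by
    refine (hE θ).congr_deriv ?_
    rw [hD θ hθ]
  have hD' : ∀ θ, HasDerivAt D (-E θ) θ := hDd
  have c1 : ∀ θ ∈ Icc 0 (π / 2), D θ * cos θ + E θ * sin θ = D 0 * cos 0 + E 0 * sin 0 := by
    refine constant_of_has_deriv_right_zero (f := fun θ => D θ * cos θ + E θ * sin θ)
      (fun θ hθ => ?_) fun θ hθ => ?_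
    · exact (((hD' θ).mul (hasDerivAt_cos θ)).add
        ((hE' θ hθ).mul (hasDerivAt_sin θ))).continuousAt.continuousWithinAt
    · refine ((((hD' θ).mul (hasDerivAt_cos θ)).add
        ((hE' θ ⟨hθ.1, hθ.2.le⟩).mul (hasDerivAt_sin θ))).congr_deriv ?_).hasDerivWithinAt
      ring
  have c2 : ∀ θ ∈ Icc 0 (π / 2), D θ * sin θ - E θ * cos θ = D 0 * sin 0 - E 0 * cos 0 := by
    refine constant_of_has_deriv_right_zero (f := fun θ => D θ * sin θ - E θ * cos θ)
      (fun θ hθ => ?_) fun θ hθ => ?_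
    · exact (((hD' θ).mul (hasDerivAt_sin θ)).sub
        ((hE' θ hθ).mul (hasDerivAt_cos θ))).continuousAt.continuousWithinAt
    · refine ((((hD' θ).mul (hasDerivAt_sin θ)).sub
        ((hE' θ ⟨hθ.1, hθ.2.le⟩).mul (hasDerivAt_cos θ))).congr_deriv ?_).hasDerivWithinAt
      ring
  have E0 : E 0 = 0 := by simp [hEdef, W_ang_zero]
  have q : π / 4 ∈ Icc 0 (π / 2) := ⟨by positivity, by linarith [pi_pos]⟩
  have D4 : D (π / 4) = 0 := by
    have h4 : Wd 1 (π / 4) = 0 := by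
      rw [← exp_zero, Wd_exp, Tθ, heatC_quarter]
    have := hD _ q
    simp only [hDdef, cos_pi_div_four, sin_pi_div_four]
    linarith
  have s4 : 0 < sin (π / 4) := by rw [sin_pi_div_four]; positivity
  have k4 : 0 < cos (π / 4) := by rw [cos_pi_div_four]; positivity
  have E4 : E (π / 4) = 0 := by
    have := c2 _ q
    rw [D4, E0] at this
    simpa [k4.ne'] using this
  have D0 : D 0 = 0 := by
    have := c1 _ q
    rw [D4, E0, E4] at this
    simpa using this.symm
  have a1 := c1 θ ⟨h0, h1⟩
  have a2 := c2 θ ⟨h0, h1⟩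
  rw [D0, E0] at a1 a2
  simp only [zero_mul, add_zero, sub_zero] at a1 a2
  have sc := sin_sq_add_cos_sq θ
  have e1 : E θ = 0 := by
    linear_combination sin θ * a1 - cos θ * a2 - E θ * sc
  have e2 : D θ = 0 := by
    linear_combination cos θ * a1 + sin θ * a2 - D θ * sc
  refine ⟨by simp only [hEdef] at e1; linarith, ?_⟩
  rw [hD θ ⟨h0, h1⟩]
  simp only [hDdef] at e2
  linarith

/-! ### The square wave near `r = 1` -/

lemma Sf_reflect (t θ : ℝ) : Sf t (π / 2 - θ) = Sf t θ := heatS_reflect _ t θ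

lemma Sf_monotoneOn {t : ℝ} (ht : t < 0) : MonotoneOn (fun θ => Sf t θ) (Icc 0 (π / 4)) := by
  refine monotoneOn_of_hasDerivWithinAt_nonneg (f' := fun θ => Gf t θ) (convex_Icc _ _)
    (fun θ _ => (Sf_dθ ht).continuousAt.continuousWithinAt)
    (fun θ _ => (Sf_dθ ht).hasDerivWithinAt) fun θ hθ => ?_
  rw [interior_Icc] at hθ
  exact (Gf_pos ht hθ.1.le hθ.2).le

/-- Up to an arbitrarily small error, `Sf` is at least `1` near `t = 0`: it dominates a difference
quotient of `Uf`, whose limit is known. -/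
lemma Sf_lower {θ : ℝ} (h0 : 0 < θ) (h1 : θ < π / 2) {η : ℝ} (hη : 0 < η) :
    ∀ᶠ t in 𝓝[<] 0, 1 - η < Sf t θ := by
  have half : ∀ θ, 0 < θ → θ ≤ π / 4 → ∀ᶠ t in 𝓝[<] 0, 1 - η < Sf t θ := by
    intro θ h0 h1
    have hlim := ((Uf_tendsto θ).sub (Uf_tendsto (θ / 2))).div_const (θ / 2)
    have hpi := pi_pos
    rw [Uf_zero h0.le (by linarith), Uf_zero (by linarith) (by linarith),
      show (θ - π / 4 - (θ / 2 - π / 4)) / (θ / 2) = 1 by field_simp; ring] at hlim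
    have hev := hlim.eventually (lt_mem_nhds (show 1 - η < 1 by linarith))
    filter_upwards [hev, self_mem_nhdsWithin] with t ht ht0
    obtain ⟨ξ, hξ, he⟩ := exists_hasDerivAt_eq_slope (fun θ => Uf t θ) (fun θ => Sf t θ)
      (show θ / 2 < θ by linarith) (fun x _ => (Uf_dθ ht0).continuousAt.continuousWithinAt)
      fun x _ => Uf_dθ ht0
    have hm := Sf_monotoneOn ht0 (a := ξ) (b := θ) ⟨by linarith [hξ.1], by linarith [hξ.2]⟩
      ⟨h0.le, h1⟩ hξ.2.le
    simp only [show θ - θ / 2 = θ / 2 by ring] at he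
    simp only [← he] at ht
    exact ht.trans_le hm
  rcases le_or_gt θ (π / 4) with h2 | h2
  · exact half θ h0 h2
  · have := half (π / 2 - θ) (by linarith) (by linarith)
    simpa only [Sf_reflect] using this

lemma Sf_mono_t {θ : ℝ} (h0 : 0 < θ) (h1 : θ < π / 2) : MonotoneOn (fun t => Sf t θ) (Iio 0) := by
  refine monotoneOn_of_hasDerivWithinAt_nonneg (f' := fun t => Hf t θ) (convex_Iio _)
    (fun t ht => (Sf_dt ht).continuousAt.continuousWithinAt)
    (fun t ht => ?_) fun t ht => ?_
  all_goals rw [interior_Iio] at ht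
  · exact (Sf_dt ht).hasDerivWithinAt
  · exact (Hf_pos ht h0 h1).le

lemma Sf_upper {t : ℝ} (ht : t < 0) : Sf t (π / 4) ≤ 1 := by
  have hpi := pi_pos
  have lt4 : ∀ θ, 0 < θ → θ < π / 4 → Sf t θ ≤ 1 := by
    intro θ h0 h1
    have hlim := ((Uf_tendsto (π / 4)).sub (Uf_tendsto θ)).div_const (π / 4 - θ)
    have hne : π / 4 - θ ≠ 0 := by linarith
    rw [Uf_zero (by linarith) (by linarith), Uf_zero h0.le (by linarith),
      show (π / 4 - π / 4 - (θ - π / 4)) / (π / 4 - θ) = 1 by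
        rw [show π / 4 - π / 4 - (θ - π / 4) = π / 4 - θ by ring, div_self hne]] at hlim
    refine ge_of_tendsto hlim ?_
    filter_upwards [Ioo_mem_nhdsLT ht] with t' ht'
    obtain ⟨ξ, hξ, he⟩ := exists_hasDerivAt_eq_slope (fun θ => Uf t' θ) (fun θ => Sf t' θ)
      h1 (fun x _ => (Uf_dθ ht'.2).continuousAt.continuousWithinAt)
      fun x _ => Uf_dθ ht'.2
    rw [← he]
    exact (Sf_mono_t h0 (by linarith) ht ht'.2 ht'.1.le).trans
      (Sf_monotoneOn ht'.2 ⟨h0.le, h1.le⟩ ⟨by linarith [hξ.1], hξ.2.le⟩ hξ.1.le)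
  have hc : Tendsto (fun θ => Sf t θ) (𝓝[<] (π / 4)) (𝓝 (Sf t (π / 4))) :=
    (Sf_dθ ht).continuousAt.tendsto.mono_left nhdsWithin_le_nhds
  refine le_of_tendsto hc ?_
  filter_upwards [Ioo_mem_nhdsLT (show 0 < π / 4 by positivity)] with θ hθ
  exact lt4 θ hθ.1 hθ.2

/-! ### The radial derivative -/

/-- The radial derivative `∂_r W` at `r = e^t`. -/
noncomputable def Vf (t θ : ℝ) : ℝ := exp (-t) * Tt t θ

lemma Tt_dt {t θ : ℝ} (ht : t < 0) : HasDerivAt (fun t => Tt t θ) (Tt t θ + Hf t θ) t := by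
  simpa using Tt_line (t := 0) (k := 1) (θ := θ) (s := 0) (h := t) (by linarith)

lemma Vf_dt {t θ : ℝ} (ht : t < 0) : HasDerivAt (fun t => Vf t θ) (exp (-t) * Hf t θ) t := by
  refine (((hasDerivAt_neg t).exp).mul (Tt_dt ht)).congr_deriv ?_
  ring

lemma Vf_strictMono {θ : ℝ} (h0 : 0 < θ) (h1 : θ < π / 2) :
    StrictMonoOn (fun t => Vf t θ) (Iio 0) := by
  refine strictMonoOn_of_hasDerivWithinAt_pos (f' := fun t => exp (-t) * Hf t θ) (convex_Iio _)
    (fun t ht => (Vf_dt ht).continuousAt.continuousWithinAt)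
    (fun t ht => ?_) fun t ht => ?_
  all_goals rw [interior_Iio] at ht
  · exact (Vf_dt ht).hasDerivWithinAt
  · exact mul_pos (exp_pos _) (Hf_pos ht h0 h1)

/-- As `t → 0` the radial derivative reaches every value below `cos θ + sin θ`, namely the sum of the
boundary values of `Tf` and `Sf`. -/
lemma Vf_large {θ a : ℝ} (h0 : 0 < θ) (h1 : θ < π / 2) (ha : 0 ≤ a) (ha' : a < cos θ + sin θ) :
    ∃ t < 0, a < Vf t θ := by
  set η := (cos θ + sin θ - a) / 2 with hη
  have e1 := Sf_lower h0 h1 (η := η) (by linarith)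
  have e2 := Tf_tendsto θ
  rw [(W_boundary h0.le h1.le).1] at e2
  have e3 := e2.eventually (lt_mem_nhds (show cos θ + sin θ - 1 - η < cos θ + sin θ - 1 by linarith))
  obtain ⟨t, ht1, ht2, ht3⟩ := (e1.and (e3.and self_mem_nhdsWithin)).exists
  refine ⟨t, ht3, ?_⟩
  have h4 : a < Tt t θ := by rw [Tt_eq ht3]; linarith
  have h5 : 1 ≤ exp (-t) := one_le_exp (by have : t < 0 := ht3; linarith)
  rw [Vf]; nlinarith

lemma Vf_quarter {t : ℝ} (ht : t < 0) : Vf t (π / 4) < √2 := by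
  have hpi := pi_pos
  have hm := Vf_strictMono (θ := π / 4) (by linarith) (by linarith)
  refine (hm ht (show t / 2 < 0 by linarith) (by linarith)).trans_le ?_
  have e2 := Tf_tendsto (π / 4)
  rw [(W_boundary (by linarith) (by linarith)).1] at e2
  have e3 : Tendsto (fun t : ℝ => exp (-t)) (𝓝[<] 0) (𝓝 1) := by
    have : Continuous fun t : ℝ => exp (-t) := by fun_prop
    simpa using (this.tendsto 0).mono_left nhdsWithin_le_nhds
  have e4 := e3.mul (e2.add_const 1)
  rw [cos_pi_div_four, sin_pi_div_four,
    show 1 * (√2 / 2 + √2 / 2 - 1 + 1) = √2 by ring] at e4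
  refine ge_of_tendsto e4 ?_
  filter_upwards [Ioo_mem_nhdsLT (show t / 2 < 0 by linarith)] with t' ht'
  refine (hm (show t / 2 < 0 by linarith) ht'.2 ht'.1).le.trans ?_
  simp only [Vf]
  rw [Tt_eq ht'.2]
  have := Sf_upper ht'.2
  gcongr

/-! ### The gradient lies in the unit square -/

/-- The polar form of `w_p` at `e^t (cos θ, sin θ)`, multiplied by `e^t`. -/
noncomputable def Af (t θ : ℝ) : ℝ := Tt t θ * cos θ - Tθ t θ * sin θ

lemma Tt_dθ {t θ : ℝ} (ht : t < 0) : HasDerivAt (fun θ => Tt t θ) (Tθ t θ + Gf t θ) θ := by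
  simpa using Tt_line (t := t) (k := 0) (θ := 0) (s := 1) (h := θ) (by linarith)

lemma Tθ_dθ {t θ : ℝ} (ht : t < 0) : HasDerivAt (fun θ => Tθ t θ) (-Tt t θ) θ := by
  simpa using Tθ_line (t := t) (k := 0) (θ := 0) (s := 1) (h := θ) (by linarith)

lemma Af_dθ {t θ : ℝ} (ht : t < 0) : HasDerivAt (fun θ => Af t θ) (cos θ * Gf t θ) θ := by
  refine (((Tt_dθ ht).mul (hasDerivAt_cos θ)).sub
    ((Tθ_dθ ht).mul (hasDerivAt_sin θ))).congr_deriv ?_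
  ring

/-- In view of `gradw_polar`, these are the bounds `0 < w_p < 1`. -/
lemma Af_bounds {t θ : ℝ} (ht : t < 0) (h0 : 0 < θ) (h1 : θ < π / 2) :
    0 < Af t θ ∧ Af t θ < exp t := by
  have hpi := pi_pos
  have up : StrictMonoOn (fun θ => Af t θ) (Icc 0 (π / 4)) := by
    refine strictMonoOn_of_hasDerivWithinAt_pos (f' := fun θ => cos θ * Gf t θ) (convex_Icc _ _)
      (fun θ _ => (Af_dθ ht).continuousAt.continuousWithinAt)
      (fun θ _ => (Af_dθ ht).hasDerivWithinAt) fun θ hθ => ?_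
    rw [interior_Icc] at hθ
    exact mul_pos (cos_pos_of_mem_Ioo ⟨by linarith [hθ.1], by linarith [hθ.2]⟩)
      (Gf_pos ht hθ.1.le hθ.2)
  have down : StrictAntiOn (fun θ => Af t θ) (Icc (π / 4) (π / 2)) := by
    refine strictAntiOn_of_hasDerivWithinAt_neg (f' := fun θ => cos θ * Gf t θ) (convex_Icc _ _)
      (fun θ _ => (Af_dθ ht).continuousAt.continuousWithinAt)
      (fun θ _ => (Af_dθ ht).hasDerivWithinAt) fun θ hθ => ?_
    rw [interior_Icc] at hθ
    exact mul_neg_of_pos_of_neg (cos_pos_of_mem_Ioo ⟨by linarith [hθ.1], by linarith [hθ.2]⟩)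
      (Gf_neg ht hθ.1 hθ.2.le)
  have A0 : Af t 0 = 0 := by simp [Af, Tt, heatS_zero]
  have T1 : 0 ≤ -Tθ t (π / 2) := by
    -- `Tf` vanishes at `π / 2`, and `Tθ` at `0` is a sum of positive terms
    have := heatC_reflect (fun n => fr n * cA n) t (π / 2)
    rw [sub_self] at this
    rw [Tθ, ← this, heatC]
    refine tsum_nonneg fun n => ?_
    rw [fr_mul_cA]
    have := fr_sq_pos n
    simp only [mul_zero, cos_zero]
    positivity
  have A1 : 0 ≤ Af t (π / 2) := by simpa [Af] using T1
  have A4 : Af t (π / 4) < exp t := by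
    have h := Vf_quarter ht
    rw [Vf, exp_neg, ← div_eq_inv_mul, div_lt_iff₀ (exp_pos t)] at h
    have : Tθ t (π / 4) = 0 := heatC_quarter _ t
    rw [Af, this, cos_pi_div_four]
    have h2 : √2 * √2 = 2 := mul_self_sqrt (by norm_num)
    have h3 : 0 < √2 := by positivity
    have h4 := mul_lt_mul_of_pos_right h h3
    rw [mul_right_comm, h2] at h4
    linarith
  rcases le_or_gt θ (π / 4) with h2 | h2
  · refine ⟨?_, ?_⟩
    · have := up ⟨le_rfl, by linarith⟩ ⟨h0.le, h2⟩ h0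
      simp only [A0] at this; exact this
    · exact (up.monotoneOn ⟨h0.le, h2⟩ ⟨by linarith, le_rfl⟩ h2).trans_lt A4
  · refine ⟨?_, ?_⟩
    · exact A1.trans_lt (down ⟨h2.le, h1.le⟩ ⟨by linarith, le_rfl⟩ h1)
    · exact (down ⟨le_rfl, by linarith⟩ ⟨h2.le, h1.le⟩ h2).trans A4

lemma Af_reflect (t θ : ℝ) : Af t (π / 2 - θ) = Tt t θ * sin θ + Tθ t θ * cos θ := by
  have h1 : Tt t (π / 2 - θ) = Tt t θ := heatS_reflect _ t θ
  have h2 : Tθ t (π / 2 - θ) = -Tθ t θ := heatC_reflect _ t θ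
  rw [Af, h1, h2, cos_pi_div_two_sub, sin_pi_div_two_sub]; ring

/-! ### The gradient in polar coordinates -/

lemma w_polar {t θ : ℝ} (h0 : -(π / 2) < θ) (h1 : θ < π / 2) :
    w (exp t * cos θ) (exp t * sin θ) = Tf t θ := by
  have hc : 0 < cos θ := cos_pos_of_mem_Ioo ⟨h0, h1⟩
  rw [w, ← W_exp]
  congr 1
  · rw [show (exp t * cos θ) ^ 2 + (exp t * sin θ) ^ 2 = exp t ^ 2 by
      rw [mul_pow, mul_pow, ← mul_add, cos_sq_add_sin_sq, mul_one], sqrt_sq (exp_pos t).le]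
  · rw [mul_div_mul_left _ _ (exp_pos t).ne', ← tan_eq_sin_div_cos, arctan_tan h0 h1]

lemma B1_polar {b : ℝ × ℝ} (hb : b ∈ B1) : ∃ t θ, t < 0 ∧ 0 < θ ∧ θ < π / 2 ∧
    b = (exp t * cos θ, exp t * sin θ) := by
  obtain ⟨p, q⟩ := b
  obtain ⟨hp, hq, hpq⟩ := hb
  simp only at hp hq hpq
  have hN : 0 < p ^ 2 + q ^ 2 := by positivity
  refine ⟨log (√(p ^ 2 + q ^ 2)), arctan (q / p), ?_, ?_, arctan_lt_pi_div_two _, ?_⟩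
  · refine log_neg (sqrt_pos.2 hN) ?_
    rw [sqrt_lt' one_pos]; simpa using hpq
  · rw [← arctan_zero]; exact arctan_strictMono (div_pos hq hp)
  · rw [exp_log (sqrt_pos.2 hN), cos_arctan, sin_arctan]
    have e : √(1 + (q / p) ^ 2) = √(p ^ 2 + q ^ 2) / p := by
      rw [show 1 + (q / p) ^ 2 = (p ^ 2 + q ^ 2) / p ^ 2 by field_simp,
        sqrt_div hN.le, sqrt_sq hp.le]
    have := (sqrt_pos.2 hN).ne'
    rw [e]
    ext
    · simp only; field_simp
    · simp only; field_simp

lemma polar_mem_B1 {t θ : ℝ} (ht : t < 0) (h0 : 0 < θ) (h1 : θ < π / 2) :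
    (exp t * cos θ, exp t * sin θ) ∈ B1 := by
  refine ⟨mul_pos (exp_pos _) (cos_pos_of_mem_Ioo ⟨by linarith, h1⟩),
    mul_pos (exp_pos _) (sin_pos_of_pos_of_lt_pi h0 (by linarith)), ?_⟩
  simp only
  rw [mul_pow, mul_pow, ← mul_add, cos_sq_add_sin_sq, mul_one]
  have : exp t < 1 := by simpa using exp_lt_exp.2 ht
  nlinarith [exp_pos t]

lemma w_hasFDerivAt {t θ : ℝ} (ht : t < 0) (h0 : 0 < θ) (h1 : θ < π / 2) :
    HasFDerivAt (fun z : ℝ × ℝ => w z.1 z.2)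
      ((exp (-t) * Af t θ) • ContinuousLinearMap.fst ℝ ℝ ℝ +
        (exp (-t) * Af t (π / 2 - θ)) • ContinuousLinearMap.snd ℝ ℝ ℝ)
      (exp t * cos θ, exp t * sin θ) := by
  have hc : 0 < cos θ := cos_pos_of_mem_Ioo ⟨by linarith, h1⟩
  have hr := exp_pos t
  set z : ℝ × ℝ := (exp t * cos θ, exp t * sin θ) with hz
  have hz1 : z.1 = exp t * cos θ := rfl
  have hz2 : z.2 = exp t * sin θ := rfl
  have hN : z.1 ^ 2 + z.2 ^ 2 = exp t ^ 2 := by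
    rw [hz1, hz2, mul_pow, mul_pow, ← mul_add, cos_sq_add_sin_sq, mul_one]
  have hlog : 1 / 2 * log (z.1 ^ 2 + z.2 ^ 2) = t := by
    rw [hN, log_pow, log_exp]; push_cast; ring
  have harc : arctan (z.2 / z.1) = θ := by
    rw [hz1, hz2, mul_div_mul_left _ _ hr.ne', ← tan_eq_sin_div_cos,
      arctan_tan (by linarith) h1]
  have hf1 : HasFDerivAt (fun z : ℝ × ℝ => z.1) (ContinuousLinearMap.fst ℝ ℝ ℝ) z := hasFDerivAt_fst
  have hf2 : HasFDerivAt (fun z : ℝ × ℝ => z.2) (ContinuousLinearMap.snd ℝ ℝ ℝ) z := hasFDerivAt_snd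
  have hsc := cos_sq_add_sin_sq θ
  have d1 : HasFDerivAt (fun z : ℝ × ℝ => 1 / 2 * log (z.1 ^ 2 + z.2 ^ 2))
      ((exp (-t) * cos θ) • ContinuousLinearMap.fst ℝ ℝ ℝ +
        (exp (-t) * sin θ) • ContinuousLinearMap.snd ℝ ℝ ℝ) z := by
    refine ((((hf1.pow 2).add (hf2.pow 2)).log
      (by change z.1 ^ 2 + z.2 ^ 2 ≠ 0; rw [hN]; positivity)).const_mul (1 / 2)).congr_fderiv ?_
    have hv : ((fun x : ℝ × ℝ => x.1 ^ 2) + fun x : ℝ × ℝ => x.2 ^ 2) z = exp t ^ 2 := hN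
    rw [hv, hz1, hz2, exp_neg]
    ext <;> simp <;> field_simp
  have d2 : HasFDerivAt (fun z : ℝ × ℝ => arctan (z.2 * z.1⁻¹))
      ((-(exp (-t) * sin θ)) • ContinuousLinearMap.fst ℝ ℝ ℝ +
        (exp (-t) * cos θ) • ContinuousLinearMap.snd ℝ ℝ ℝ) z := by
    have hi : HasFDerivAt (fun z : ℝ × ℝ => z.1⁻¹)
        ((-(z.1 ^ 2)⁻¹) • ContinuousLinearMap.fst ℝ ℝ ℝ) z :=
      (hasDerivAt_inv (x := z.1) (by rw [hz1]; positivity)).comp_hasFDerivAt z hf1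
    have hm := (hf2.mul hi).arctan
    refine hm.congr_fderiv ?_
    have hv : 1 + (exp t * sin θ * (exp t * cos θ)⁻¹) ^ 2 = 1 / cos θ ^ 2 := by
      field_simp; linarith
    ext <;> simp [hz1, hz2, exp_neg] <;> rw [← mul_inv, mul_comm (cos θ), hv] <;> field_simp
  have d3 := d1.prodMk d2
  have hT := hasFDerivAt_heatS adm_cA (z := (t, θ)) ht
  have hT' : HasFDerivAt (fun z : ℝ × ℝ => heatS cA z.1 z.2)
      (Tt t θ • ContinuousLinearMap.fst ℝ ℝ ℝ + Tθ t θ • ContinuousLinearMap.snd ℝ ℝ ℝ)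
      (1 / 2 * log (z.1 ^ 2 + z.2 ^ 2), arctan (z.2 * z.1⁻¹)) := by
    rw [hlog, ← div_eq_mul_inv, harc]; exact hT
  have hmain := hT'.comp z d3
  have hev : (fun z : ℝ × ℝ => w z.1 z.2) =ᶠ[𝓝 z]
      (fun z : ℝ × ℝ => heatS cA z.1 z.2) ∘ fun z : ℝ × ℝ =>
        (1 / 2 * log (z.1 ^ 2 + z.2 ^ 2), arctan (z.2 * z.1⁻¹)) := by
    have ho : ∀ᶠ y : ℝ × ℝ in 𝓝 z, 0 < y.1 :=
      continuousAt_fst.eventually (lt_mem_nhds (by rw [hz1]; positivity))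
    filter_upwards [ho] with y hy
    have hNy : 0 < y.1 ^ 2 + y.2 ^ 2 := by positivity
    simp only [Function.comp]
    rw [w, ← div_eq_mul_inv]
    change _ = Tf _ _
    rw [← W_exp]
    congr 1
    rw [sqrt_eq_rpow, rpow_def_of_pos hNy, mul_comm]
  refine (hmain.congr_of_eventuallyEq hev).congr_fderiv ?_
  rw [Af_reflect, Af]
  ext <;> simp <;> ring

/-- The gradient of `w` in polar coordinates. -/
lemma gradw_polar {t θ : ℝ} (ht : t < 0) (h0 : 0 < θ) (h1 : θ < π / 2) :
    gradw (exp t * cos θ, exp t * sin θ) =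
      (exp (-t) * Af t θ, exp (-t) * Af t (π / 2 - θ)) := by
  have h := w_hasFDerivAt ht h0 h1
  have e1 := h.comp_hasDerivAt (exp t * cos θ)
    ((hasDerivAt_id (exp t * cos θ)).prodMk (hasDerivAt_const (exp t * cos θ) (exp t * sin θ)))
  have e2 := h.comp_hasDerivAt (exp t * sin θ)
    ((hasDerivAt_const (exp t * sin θ) (exp t * cos θ)).prodMk (hasDerivAt_id (exp t * sin θ)))
  have e1' := e1.deriv
  have e2' := e2.deriv
  simp [Function.comp_def] at e1' e2'
  rw [gradw, wp, wq, e1', e2']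

lemma gradw_mapsTo : MapsTo gradw B1 Ω1 := by
  intro b hb
  obtain ⟨t, θ, ht, h0, h1, rfl⟩ := B1_polar hb
  rw [gradw_polar ht h0 h1]
  have key : ∀ θ, 0 < θ → θ < π / 2 → exp (-t) * Af t θ ∈ Ioo (0 : ℝ) 1 := by
    intro θ h0 h1
    obtain ⟨a, b⟩ := Af_bounds ht h0 h1
    refine ⟨mul_pos (exp_pos _) a, ?_⟩
    rw [exp_neg, ← div_eq_inv_mul, div_lt_one (exp_pos t)]
    exact b
  exact ⟨key θ h0 h1, key _ (by linarith) (by linarith)⟩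

/-- The gradient equation `∇w = (x, y)` in polar form: both partial derivatives of
`e^t (x cos θ + y sin θ) - W(e^t, θ)` vanish. -/
lemma gradw_eq_iff {t θ x y : ℝ} (ht : t < 0) (h0 : 0 < θ) (h1 : θ < π / 2) :
    gradw (exp t * cos θ, exp t * sin θ) = (x, y) ↔
      exp t * (x * cos θ + y * sin θ) = Tt t θ ∧
        exp t * (-x * sin θ + y * cos θ) = Tθ t θ := by
  rw [gradw_polar ht h0 h1, Prod.mk.injEq, Af_reflect, Af, exp_neg, inv_mul_eq_iff_eq_mul₀
    (exp_pos t).ne', inv_mul_eq_iff_eq_mul₀ (exp_pos t).ne']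
  have hs := cos_sq_add_sin_sq θ
  constructor
  · rintro ⟨a, b⟩
    exact ⟨by linear_combination Tt t θ * hs - cos θ * a - sin θ * b,
      by linear_combination Tθ t θ * hs + sin θ * a - cos θ * b⟩
  · rintro ⟨a, b⟩
    exact ⟨by linear_combination exp t * x * hs - cos θ * a + sin θ * b,
      by linear_combination exp t * y * hs - sin θ * a - cos θ * b⟩

/-! ### Maximisation in the radius -/

/-- A strict maximiser over a compact set depends continuously on the parameter. -/
lemma continuousOn_argmax {X : Type*} [TopologicalSpace X] {s : Set X} {K : Set ℝ}
    (hK : IsCompact K) {f : X → ℝ → ℝ}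
    (hf : ContinuousOn (fun z : X × ℝ => f z.1 z.2) (s ×ˢ K)) {ρ : X → ℝ}
    (hρ : ∀ x ∈ s, ρ x ∈ K) (hmax : ∀ x ∈ s, ∀ k ∈ K, k ≠ ρ x → f x k < f x (ρ x)) :
    ContinuousOn ρ s := by
  intro x₀ hx₀
  refine tendsto_def.2 fun N hN => ?_
  obtain ⟨U, hUN, hU, hxU⟩ := mem_nhds_iff.1 hN
  have hc : ContinuousWithinAt (fun x => f x (ρ x₀)) s x₀ :=
    (hf (x₀, ρ x₀) ⟨hx₀, hρ _ hx₀⟩).comp (f := fun x => (x, ρ x₀))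
      (continuousWithinAt_id.prodMk continuousWithinAt_const) fun x hx => ⟨hx, hρ _ hx₀⟩
  have key : ∀ᶠ x in 𝓝 x₀, ∀ k ∈ K \ U, x ∈ s → k ∈ K → f x k < f x (ρ x₀) := by
    refine (hK.diff hU).eventually_forall_of_forall_eventually fun k hk => ?_
    have hlt : f x₀ k < f x₀ (ρ x₀) := hmax x₀ hx₀ k hk.1 fun h => hk.2 (h ▸ hxU)
    have h2 : Tendsto (fun z : X × ℝ => f z.1 (ρ x₀)) (𝓝[s ×ˢ K] (x₀, k)) (𝓝 (f x₀ (ρ x₀))) :=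
      hc.tendsto.comp (tendsto_nhdsWithin_iff.2
        ⟨continuousAt_fst.tendsto.mono_left nhdsWithin_le_nhds,
          eventually_mem_nhdsWithin.mono fun z hz => hz.1⟩)
    have h1 := (hf (x₀, k) ⟨hx₀, hk.1⟩).tendsto.eventually_lt h2 hlt
    rw [eventually_nhdsWithin_iff] at h1
    filter_upwards [h1] with z hz hz1 hz2
    exact hz ⟨hz1, hz2⟩
  filter_upwards [mem_nhdsWithin_of_mem_nhds key, self_mem_nhdsWithin] with x hx hxs
  refine hUN (by_contra fun hn => ?_)
  have h1 := hx (ρ x) ⟨hρ x hxs, hn⟩ hxs (hρ x hxs)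
  have h2 := hmax x hxs (ρ x₀) (hρ _ hx₀) fun h => hn (h ▸ hxU)
  exact lt_asymm h1 h2

/-- The frequencies satisfy `mₙ² ≥ 4`, so `Tt` decays like `e^{2t}` and `Vf` tends to `0` as `t → -∞`. -/
lemma Vf_small (θ : ℝ) {a : ℝ} (ha : 0 < a) : ∃ t < 0, Vf t θ < a := by
  set b := fun n => fr n ^ 2 * cA n with hb
  have hs := (adm_cA.fr_sq_mul (-1) (by norm_num)).mul_left (exp 2)
  set C := ∑' n, exp 2 * (|fr n ^ 2 * cA n| * exp (fr n ^ 2 * (-1))) with hC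
  have hbound : ∀ t ≤ -1, Tt t θ ≤ C * exp (2 * t) := by
    intro t ht
    rw [Tt, heatS, hC, ← tsum_mul_right]
    refine (adm_cA.fr_sq_mul.summable_sin (by linarith) _).tsum_le_tsum (fun n => ?_)
      (hs.mul_right _)
    calc fr n ^ 2 * cA n * exp (fr n ^ 2 * t) * sin (fr n * θ)
        ≤ |fr n ^ 2 * cA n| * exp (fr n ^ 2 * t) * 1 := by
          refine (le_abs_self _).trans ?_
          rw [abs_mul, abs_mul, abs_exp]
          exact mul_le_mul_of_nonneg_left (abs_sin_le_one _) (by positivity)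
      _ ≤ |fr n ^ 2 * cA n| * (exp 2 * exp (fr n ^ 2 * (-1)) * exp (2 * t)) := by
          rw [mul_one, ← exp_add, ← exp_add]
          refine mul_le_mul_of_nonneg_left (exp_le_exp.2 ?_) (abs_nonneg _)
          nlinarith [fr_ge n, mul_nonneg (show 0 ≤ fr n ^ 2 - 2 by nlinarith [fr_ge n])
            (show 0 ≤ -1 - t by linarith)]
      _ = _ := by ring
  have hlim : Tendsto (fun t => C * exp t) atBot (𝓝 0) := by
    simpa using tendsto_exp_atBot.const_mul C
  obtain ⟨t, h1, h2⟩ := ((hlim.eventually (gt_mem_nhds ha)).and (eventually_le_atBot (-1))).exists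
  refine ⟨t, by linarith, lt_of_le_of_lt ?_ h1⟩
  rw [Vf]
  calc exp (-t) * Tt t θ ≤ exp (-t) * (C * exp (2 * t)) :=
        mul_le_mul_of_nonneg_left (hbound t h2) (exp_pos _).le
    _ = C * (exp (-t) * exp (2 * t)) := by ring
    _ = C * exp t := by rw [← exp_add]; congr 2; ring

lemma Vf_exists {θ a : ℝ} (h0 : 0 < θ) (h1 : θ < π / 2) (ha : 0 < a) (ha' : a < cos θ + sin θ) :
    ∃ t < 0, Vf t θ = a := by
  obtain ⟨t₁, ht₁, hv₁⟩ := Vf_small θ ha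
  obtain ⟨t₂, ht₂, hv₂⟩ := Vf_large h0 h1 ha.le ha'
  have hlt : t₁ < t₂ := ((Vf_strictMono h0 h1).lt_iff_lt ht₁ ht₂).1 (hv₁.trans hv₂)
  obtain ⟨t, ht, he⟩ := intermediate_value_Icc hlt.le (f := fun t => Vf t θ)
    (fun t ht => (Vf_dt (lt_of_le_of_lt ht.2 ht₂)).continuousAt.continuousWithinAt)
    ⟨hv₁.le, hv₂.le⟩
  exact ⟨t, lt_of_le_of_lt ht.2 ht₂, he⟩

lemma W_dr {r θ : ℝ} (h0 : 0 < r) (h1 : r < 1) :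
    HasDerivAt (fun r => W r θ) (Vf (log r) θ) r := by
  have h := (heatS_dt adm_cA (θ := θ) (log_neg h0 h1)).comp r (hasDerivAt_log h0.ne')
  have hev : (fun r => W r θ) =ᶠ[𝓝 r] (fun t => heatS cA t θ) ∘ log := by
    filter_upwards [lt_mem_nhds h0] with s hs
    simp only [Function.comp]
    rw [← powSer_exp_zero, exp_log hs, W_eq]
  refine (h.congr_of_eventuallyEq hev).congr_deriv ?_
  rw [Vf, exp_neg, exp_log h0, Tt]; ring

/-- By the monotonicity of `∂_r W`, the radius `e^t` is the strict maximiser for the value `Vf t θ` of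
the linear coefficient. -/
lemma radial_max {t θ : ℝ} (ht : t < 0) (h0 : 0 < θ) (h1 : θ < π / 2) :
    ∀ r ∈ Icc (0 : ℝ) 1, r ≠ exp t →
      r * Vf t θ - W r θ < exp t * Vf t θ - W (exp t) θ := by
  have het : exp t < 1 := by simpa using exp_lt_exp.2 ht
  have hct : ContinuousOn (fun r => r * Vf t θ - W r θ) (Icc 0 1) := by
    refine (by fun_prop : Continuous fun r : ℝ => r * Vf t θ).continuousOn.sub ?_
    exact W_continuousOn.comp (f := fun r : ℝ => (r, θ)) (by fun_prop) fun r hr => ⟨hr, mem_univ _⟩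
  have hd : ∀ r, 0 < r → r < 1 →
      HasDerivAt (fun r => r * Vf t θ - W r θ) (Vf t θ - Vf (log r) θ) r := fun r h h' => by
    refine (((hasDerivAt_id r).mul_const (Vf t θ)).sub (W_dr h h')).congr_deriv ?_
    simp
  have up : StrictMonoOn (fun r => r * Vf t θ - W r θ) (Icc 0 (exp t)) := by
    refine strictMonoOn_of_hasDerivWithinAt_pos (f' := fun r => Vf t θ - Vf (log r) θ)
      (convex_Icc _ _) (hct.mono (Icc_subset_Icc_right het.le)) (fun r hr => ?_) fun r hr => ?_
    all_goals rw [interior_Icc] at hr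
    · exact (hd r hr.1 (hr.2.trans het)).hasDerivWithinAt
    · refine sub_pos.2 (Vf_strictMono h0 h1 (log_neg hr.1 (hr.2.trans het)) ht ?_)
      exact (log_lt_iff_lt_exp hr.1).2 hr.2
  have down : StrictAntiOn (fun r => r * Vf t θ - W r θ) (Icc (exp t) 1) := by
    refine strictAntiOn_of_hasDerivWithinAt_neg (f' := fun r => Vf t θ - Vf (log r) θ)
      (convex_Icc _ _) (hct.mono (Icc_subset_Icc_left (exp_pos t).le)) (fun r hr => ?_)
      fun r hr => ?_
    all_goals rw [interior_Icc] at hr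
    all_goals have hr0 : 0 < r := (exp_pos t).trans hr.1
    · exact (hd r hr0 hr.2).hasDerivWithinAt
    · refine sub_neg.2 (Vf_strictMono h0 h1 ht (log_neg hr0 hr.2) ?_)
      exact (lt_log_iff_exp_lt hr0).2 hr.1
  intro r hr hne
  rcases lt_or_gt_of_ne hne with h | h
  · exact up ⟨hr.1, h.le⟩ ⟨(exp_pos t).le, le_rfl⟩ h
  · exact down ⟨le_rfl, het.le⟩ ⟨h.le, hr.2⟩ h

/-- The function whose minimax is `u`. -/
noncomputable def Ff (x y r θ : ℝ) : ℝ := r * (x * cos θ + y * sin θ) - W r θ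

/-- The strict maximiser property that defines `Rad`. -/
def IsRad (x y θ r : ℝ) : Prop :=
  r ∈ Icc (0 : ℝ) 1 ∧ ∀ r' ∈ Icc (0 : ℝ) 1, r' ≠ r → Ff x y r' θ < Ff x y r θ

/-- The maximiser of `r ↦ r (x cos θ + y sin θ) - W(r, θ)` on `[0, 1]`, with an arbitrary value
where there is no strict one. -/
noncomputable def Rad (x y θ : ℝ) : ℝ := Classical.epsilon (IsRad x y θ)

/-- The inner maximum in the definition of `u`. -/
noncomputable def Phi (x y θ : ℝ) : ℝ := Ff x y (Rad x y θ) θ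

lemma IsRad.eq {x y θ r r' : ℝ} (h : IsRad x y θ r) (h' : IsRad x y θ r') : r = r' := by
  by_contra hne
  exact lt_asymm (h'.2 r h.1 hne) (h.2 r' h'.1 (Ne.symm hne))

lemma IsRad.rad_eq {x y θ r : ℝ} (h : IsRad x y θ r) : Rad x y θ = r :=
  (Classical.epsilon_spec ⟨r, h⟩ : IsRad x y θ (Rad x y θ)).eq h

lemma isRad_of_Vf {x y t θ : ℝ} (ht : t < 0) (h0 : 0 < θ) (h1 : θ < π / 2)
    (hV : Vf t θ = x * cos θ + y * sin θ) : IsRad x y θ (exp t) := by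
  refine ⟨⟨(exp_pos t).le, exp_le_one_iff.2 ht.le⟩, fun r hr hne => ?_⟩
  have := radial_max ht h0 h1 r hr hne
  rwa [hV] at this

lemma Vf_interior {x y θ : ℝ} (hx : x ∈ Ioo (0 : ℝ) 1) (hy : y ∈ Ioo (0 : ℝ) 1)
    (h0 : 0 < θ) (h1 : θ < π / 2) :
    ∃ t < 0, Vf t θ = x * cos θ + y * sin θ := by
  have hc : 0 < cos θ := cos_pos_of_mem_Ioo ⟨by linarith, h1⟩
  have hs : 0 < sin θ := sin_pos_of_pos_of_lt_pi h0 (by linarith)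
  exact Vf_exists h0 h1 (add_pos (mul_pos hx.1 hc) (mul_pos hy.1 hs))
    (add_lt_add (by nlinarith [hx.2]) (by nlinarith [hy.2]))

lemma isRad_zero {x y : ℝ} (hx : x ∈ Ioo (0 : ℝ) 1) : IsRad x y 0 1 := by
  refine ⟨⟨zero_le_one, le_rfl⟩, fun r hr hne => ?_⟩
  have := lt_of_le_of_ne hr.2 hne
  simp only [Ff, W_ang_zero, cos_zero, sin_zero]
  nlinarith [hx.1]

lemma isRad_pi_div_two {x y : ℝ} (hy : y ∈ Ioo (0 : ℝ) 1) : IsRad x y (π / 2) 1 := by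
  refine ⟨⟨zero_le_one, le_rfl⟩, fun r hr hne => ?_⟩
  have := lt_of_le_of_ne hr.2 hne
  simp only [Ff, W_ang_pi_div_two, cos_pi_div_two, sin_pi_div_two]
  nlinarith [hy.1]

lemma isRad_rad {x y θ : ℝ} (hx : x ∈ Ioo (0 : ℝ) 1) (hy : y ∈ Ioo (0 : ℝ) 1)
    (hθ : θ ∈ Icc 0 (π / 2)) : IsRad x y θ (Rad x y θ) := by
  suffices h : ∃ r, IsRad x y θ r from Classical.epsilon_spec h
  rcases eq_or_lt_of_le hθ.1 with h0 | h0
  · exact ⟨1, h0 ▸ isRad_zero hx⟩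
  rcases eq_or_lt_of_le hθ.2 with h1 | h1
  · exact ⟨1, h1 ▸ isRad_pi_div_two hy⟩
  obtain ⟨t, ht, hV⟩ := Vf_interior hx hy h0 h1
  exact ⟨_, isRad_of_Vf ht h0 h1 hV⟩

lemma Ff_le_Phi {x y r θ : ℝ} (hx : x ∈ Ioo (0 : ℝ) 1) (hy : y ∈ Ioo (0 : ℝ) 1)
    (hθ : θ ∈ Icc 0 (π / 2)) (hr : r ∈ Icc (0 : ℝ) 1) :
    Ff x y r θ ≤ Phi x y θ := by
  have h := isRad_rad hx hy hθ
  rcases eq_or_ne r (Rad x y θ) with rfl | hne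
  · exact le_rfl
  · exact (h.2 r hr hne).le

lemma Ff_continuousOn : ContinuousOn (fun z : ((ℝ × ℝ) × ℝ) × ℝ => Ff z.1.1.1 z.1.1.2 z.2 z.1.2)
    (univ ×ˢ Icc 0 1) := by
  refine (by fun_prop : Continuous fun z : ((ℝ × ℝ) × ℝ) × ℝ =>
    z.2 * (z.1.1.1 * cos z.1.2 + z.1.1.2 * sin z.1.2)).continuousOn.sub ?_
  exact W_continuousOn.comp (f := fun z : ((ℝ × ℝ) × ℝ) × ℝ => (z.2, z.1.2)) (by fun_prop)
    fun z hz => ⟨hz.2, mem_univ _⟩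

lemma Rad_continuousOn : ContinuousOn (fun z : (ℝ × ℝ) × ℝ => Rad z.1.1 z.1.2 z.2)
    (Ω1 ×ˢ Icc 0 (π / 2)) :=
  continuousOn_argmax isCompact_Icc (f := fun (z : (ℝ × ℝ) × ℝ) r => Ff z.1.1 z.1.2 r z.2)
    (Ff_continuousOn.mono (prod_mono_left (subset_univ _)))
    (fun _ hz => (isRad_rad hz.1.1 hz.1.2 hz.2).1)
    fun _ hz => (isRad_rad hz.1.1 hz.1.2 hz.2).2

lemma Phi_continuousOn : ContinuousOn (fun z : (ℝ × ℝ) × ℝ => Phi z.1.1 z.1.2 z.2)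
    (Ω1 ×ˢ Icc 0 (π / 2)) :=
  Ff_continuousOn.comp (f := fun z : (ℝ × ℝ) × ℝ => (z, Rad z.1.1 z.1.2 z.2))
    (continuousOn_id.prodMk Rad_continuousOn)
    fun _ hz => ⟨mem_univ _, (isRad_rad hz.1.1 hz.1.2 hz.2).1⟩

/-! ### Second-order tests and the envelope -/

/-- The second-order necessary condition at a local maximum. A positive second derivative would make `0`
a local minimum too, so that `g` would be locally constant. -/
lemma second_deriv_nonpos {g g₁ : ℝ → ℝ} {c : ℝ} (hmax : IsLocalMax g 0)
    (h1 : ∀ᶠ h in 𝓝 0, HasDerivAt g (g₁ h) h) (h2 : HasDerivAt g₁ c 0) : c ≤ 0 := by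
  by_contra! hc
  have e : deriv g =ᶠ[𝓝 0] g₁ := h1.mono fun h hh => hh.deriv
  have hd : deriv (deriv g) 0 = c := by rw [e.deriv_eq, h2.deriv]
  have hmin := isLocalMin_of_deriv_deriv_pos (hd ▸ hc) hmax.deriv_eq_zero
    h1.self_of_nhds.continuousAt
  have hconst : g =ᶠ[𝓝 0] fun _ => g 0 := by
    filter_upwards [hmax, hmin] with h a b
    exact le_antisymm a b
  have e0 : g₁ =ᶠ[𝓝 0] fun _ => (0 : ℝ) := by
    filter_upwards [e, hconst.deriv] with h a b
    rw [← a, b]; simp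
  have : c = 0 := by rw [← h2.deriv, e0.deriv_eq]; simp
  exact hc.ne' this

/-- The restriction of `e^t (x cos θ + y sin θ) - W(e^t, θ)` to the line through `(t, θ)` with
direction `(k, 1)`. -/
noncomputable def Dc (x y t k θ h : ℝ) : ℝ :=
  exp (t + k * h) * (x * cos (θ + 1 * h) + y * sin (θ + 1 * h)) - Tf (t + k * h) (θ + 1 * h)

/-- The derivative of `Dc` in `h`. -/
noncomputable def Dc' (x y t k θ h : ℝ) : ℝ :=
  exp (t + k * h) * (k * (x * cos (θ + 1 * h) + y * sin (θ + 1 * h)) +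
      (-x * sin (θ + 1 * h) + y * cos (θ + 1 * h))) -
    (k * Tt (t + k * h) (θ + 1 * h) + 1 * Tθ (t + k * h) (θ + 1 * h))

lemma line_hasDerivAt (a k h : ℝ) : HasDerivAt (fun h : ℝ => a + k * h) k h := by
  simpa using ((hasDerivAt_id h).const_mul k).const_add a

lemma Dc_hasDerivAt {x y t k θ h : ℝ} (ht : t + k * h < 0) :
    HasDerivAt (fun h => Dc x y t k θ h) (Dc' x y t k θ h) h := by
  have l1 := line_hasDerivAt t k h
  have l2 := line_hasDerivAt θ 1 h
  refine ((l1.exp.mul ((l2.cos.const_mul x).add (l2.sin.const_mul y))).sub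
    (Tf_line ht)).congr_deriv ?_
  simp only [Dc', Pi.add_apply]; ring

lemma Dc'_hasDerivAt {x y t k θ : ℝ} (ht : t < 0) :
    HasDerivAt (fun h => Dc' x y t k θ h)
      (exp t * (k ^ 2 * (x * cos θ + y * sin θ) + 2 * k * (-x * sin θ + y * cos θ) -
        (x * cos θ + y * sin θ)) - (k ^ 2 * (Tt t θ + Hf t θ) + 2 * k * (Tθ t θ + Gf t θ)
          - Tt t θ)) 0 := by
  have ht' : t + k * 0 < 0 := by simpa using ht
  have l1 := line_hasDerivAt t k 0
  have l2 := line_hasDerivAt θ 1 0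
  refine ((l1.exp.mul ((((l2.cos.const_mul x).add (l2.sin.const_mul y)).const_mul k).add
    ((l2.sin.const_mul (-x)).add (l2.cos.const_mul y)))).sub
    (((Tt_line ht').const_mul k).add ((Tθ_line ht').const_mul 1))).congr_deriv ?_
  simp only [mul_zero, add_zero, Pi.add_apply]
  ring

/-- The angular derivative of `Ff`. -/
noncomputable def Fd (x y r θ : ℝ) : ℝ := r * (-x * sin θ + y * cos θ) - Wd r θ

lemma Ff_hasDerivAt {x y r θ : ℝ} (hr : r ∈ Icc (0 : ℝ) 1) :
    HasDerivAt (fun θ => Ff x y r θ) (Fd x y r θ) θ := by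
  refine (((((hasDerivAt_cos θ).const_mul x).add ((hasDerivAt_sin θ).const_mul y)).const_mul r).sub
    (W_hasDerivAt hr.1 hr.2 θ)).congr_deriv ?_
  rw [Fd]; ring

lemma Fd_continuousOn (x y : ℝ) :
    ContinuousOn (fun z : ℝ × ℝ => Fd x y z.1 z.2) (Icc 0 1 ×ˢ univ) :=
  (by fun_prop : Continuous fun z : ℝ × ℝ =>
    z.1 * (-x * sin z.2 + y * cos z.2)).continuousOn.sub Wd_continuousOn

lemma Rad_continuousOn_fixed {x y : ℝ} (hx : x ∈ Ioo (0 : ℝ) 1) (hy : y ∈ Ioo (0 : ℝ) 1) :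
    ContinuousOn (fun θ => Rad x y θ) (Icc 0 (π / 2)) :=
  Rad_continuousOn.comp (f := fun θ : ℝ => ((x, y), θ)) (by fun_prop)
    fun _ hθ => ⟨⟨hx, hy⟩, hθ⟩

lemma Phi_continuousOn_fixed {x y : ℝ} (hx : x ∈ Ioo (0 : ℝ) 1) (hy : y ∈ Ioo (0 : ℝ) 1) :
    ContinuousOn (fun θ => Phi x y θ) (Icc 0 (π / 2)) :=
  Phi_continuousOn.comp (f := fun θ : ℝ => ((x, y), θ)) (by fun_prop)
    fun _ hθ => ⟨⟨hx, hy⟩, hθ⟩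

/-- One-sided envelope inequality at a minimiser of `Phi`; the direction is `s = 1` or `s = -1`. -/
lemma envelope {x y : ℝ} (hx : x ∈ Ioo (0 : ℝ) 1) (hy : y ∈ Ioo (0 : ℝ) 1) {θ s : ℝ}
    (hθ : θ ∈ Icc 0 (π / 2)) (hdir : ∀ᶠ h in 𝓝[>] 0, θ + s * h ∈ Icc 0 (π / 2))
    (hmin : ∀ᶠ h in 𝓝[>] 0, Phi x y θ ≤ Phi x y (θ + s * h)) :
    0 ≤ s * Fd x y (Rad x y θ) θ := by
  by_contra! hneg
  have hR := isRad_rad hx hy hθ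
  have hc := ((Fd_continuousOn x y).const_mul s) (Rad x y θ, θ) ⟨hR.1, mem_univ _⟩
  have hev := hc.eventually (gt_mem_nhds hneg)
  rw [nhdsWithin_prod_eq, nhdsWithin_univ, eventually_prod_iff] at hev
  obtain ⟨p, hp, q, hq, hpq⟩ := hev
  have hline : Tendsto (fun h : ℝ => θ + s * h) (𝓝 0) (𝓝 θ) := by
    have : Continuous fun h : ℝ => θ + s * h := by fun_prop
    simpa using this.tendsto 0
  have hRt : Tendsto (fun h => Rad x y (θ + s * h)) (𝓝[>] 0) (𝓝[Icc 0 1] (Rad x y θ)) := by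
    refine tendsto_nhdsWithin_iff.2 ⟨?_, hdir.mono fun h hh => (isRad_rad hx hy hh).1⟩
    exact (Rad_continuousOn_fixed hx hy θ hθ).tendsto.comp
      (tendsto_nhdsWithin_iff.2 ⟨hline.mono_left nhdsWithin_le_nhds, hdir⟩)
  obtain ⟨δ, hδ, hball⟩ := Metric.eventually_nhds_iff.1 (hline.eventually hq)
  obtain ⟨h, ⟨h1, h2⟩, h3, h4⟩ := ((hdir.and hmin).and
    ((hRt.eventually hp).and (Ioo_mem_nhdsGT hδ))).exists
  have hR' := (isRad_rad hx hy h1).1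
  have hd : ∀ η, HasDerivAt (fun η => Ff x y (Rad x y (θ + s * h)) (θ + s * η))
      (s * Fd x y (Rad x y (θ + s * h)) (θ + s * η)) η := fun η => by
    have := (Ff_hasDerivAt (x := x) (y := y) hR' (θ := θ + s * η)).comp η (line_hasDerivAt θ s η)
    refine this.congr_deriv (mul_comm _ _)
  obtain ⟨η, hη, he⟩ := exists_hasDerivAt_eq_slope _ _ h4.1
    (fun η _ => (hd η).continuousAt.continuousWithinAt) fun η _ => hd η
  have hlt := hpq h3 (y := θ + s * η) (hball (by
    rw [dist_zero_right, Real.norm_eq_abs, abs_of_pos hη.1]; exact hη.2.trans h4.2))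
  simp only at hlt
  rw [he, sub_zero, div_lt_iff₀ h4.1, zero_mul] at hlt
  simp only [mul_zero, add_zero] at hlt
  have h5 := Ff_le_Phi hx hy hθ hR'
  have h6 : Phi x y (θ + s * h) = Ff x y (Rad x y (θ + s * h)) (θ + s * h) := rfl
  linarith

/-- A minimiser of `Phi` is interior: on the two edges the maximal radius is `1` and
`Ff` decreases towards the interior. -/
lemma min_interior {x y : ℝ} (hx : x ∈ Ioo (0 : ℝ) 1) (hy : y ∈ Ioo (0 : ℝ) 1) {θ : ℝ}
    (hθ : θ ∈ Icc 0 (π / 2)) (hmin : ∀ θ' ∈ Icc 0 (π / 2), Phi x y θ ≤ Phi x y θ') :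
    (0 < θ ∧ θ < π / 2) ∧ Fd x y (Rad x y θ) θ = 0 := by
  have hpi := pi_pos
  have right : θ < π / 2 → 0 ≤ Fd x y (Rad x y θ) θ := fun h => by
    have hd : ∀ᶠ h in 𝓝[>] 0, θ + 1 * h ∈ Icc 0 (π / 2) := by
      filter_upwards [Ioo_mem_nhdsGT (show 0 < π / 2 - θ by linarith)] with h hh
      exact ⟨by linarith [hθ.1, hh.1], by linarith [hh.2]⟩
    simpa using envelope hx hy hθ hd (hd.mono fun h hh => hmin _ hh)
  have left : 0 < θ → Fd x y (Rad x y θ) θ ≤ 0 := fun h => by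
    have hd : ∀ᶠ h in 𝓝[>] 0, θ + (-1) * h ∈ Icc 0 (π / 2) := by
      filter_upwards [Ioo_mem_nhdsGT h] with h hh
      exact ⟨by linarith [hh.2], by linarith [hθ.2, hh.1]⟩
    simpa using envelope hx hy hθ hd (hd.mono fun h hh => hmin _ hh)
  have h0 : 0 < θ := by
    refine lt_of_le_of_ne hθ.1 fun h => ?_
    subst h
    have := right (by linarith)
    rw [(isRad_zero hx).rad_eq, Fd, (W_boundary le_rfl (by linarith)).2] at this
    simp at this
    linarith [hy.2]
  have h1 : θ < π / 2 := by
    refine lt_of_le_of_ne hθ.2 fun h => ?_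
    subst h
    have := left (by linarith)
    rw [(isRad_pi_div_two hy).rad_eq, Fd, (W_boundary (by linarith) le_rfl).2] at this
    simp at this
    linarith [hx.2]
  exact ⟨⟨h0, h1⟩, le_antisymm (left h0) (right h1)⟩

/-! ### Convexity of the inner maximum -/

lemma Tt_eq_Vf (t θ : ℝ) : Tt t θ = exp t * Vf t θ := by
  rw [Vf, ← mul_assoc, ← exp_add]; simp

lemma Dc_zero (x y t k θ : ℝ) : Dc x y t k θ 0 = Ff x y (exp t) θ := by
  rw [Dc, Ff, W_exp]; simp

/-- If `e^t` is the maximal radius for `θ`, then `Dc` touches `Phi` from below. -/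
lemma Dc_touch {x y : ℝ} (hx : x ∈ Ioo (0 : ℝ) 1) (hy : y ∈ Ioo (0 : ℝ) 1) {t k θ : ℝ}
    (ht : t < 0) (h0 : 0 < θ) (h1 : θ < π / 2) (hV : Vf t θ = x * cos θ + y * sin θ) :
    Dc x y t k θ 0 = Phi x y θ ∧ ∀ᶠ h in 𝓝 0, t + k * h < 0 ∧
      θ + 1 * h ∈ Icc 0 (π / 2) ∧ Dc x y t k θ h ≤ Phi x y (θ + 1 * h) := by
  refine ⟨?_, ?_⟩
  · rw [Dc_zero, Phi, (isRad_of_Vf ht h0 h1 hV).rad_eq]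
  · have c1 : Tendsto (fun h : ℝ => t + k * h) (𝓝 0) (𝓝 t) := by
      simpa using (by fun_prop : Continuous fun h : ℝ => t + k * h).tendsto 0
    have c2 : Tendsto (fun h : ℝ => θ + 1 * h) (𝓝 0) (𝓝 θ) := by
      simpa using (by fun_prop : Continuous fun h : ℝ => θ + 1 * h).tendsto 0
    filter_upwards [c1.eventually (gt_mem_nhds ht), c2.eventually (Icc_mem_nhds h0 h1)]
      with h ha hb
    refine ⟨ha, hb, ?_⟩
    have := Ff_le_Phi hx hy hb (r := exp (t + k * h))
      ⟨(exp_pos _).le, exp_le_one_iff.2 ha.le⟩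
    rwa [Ff, W_exp] at this

/-- At the maximal radius the lower support `Dc` with `k = 0` has second `θ`-derivative
`e^t (Vf t θ - (x cos θ + y sin θ)) = 0`, so `Phi` cannot lie above a chord. -/
lemma Phi_convexOn {x y : ℝ} (hx : x ∈ Ioo (0 : ℝ) 1) (hy : y ∈ Ioo (0 : ℝ) 1) :
    ConvexOn ℝ (Icc 0 (π / 2)) fun θ => Phi x y θ := by
  refine LinearOrder.convexOn_of_lt (convex_Icc _ _) fun p hp q hq hpq a b ha hb hab => ?_
  simp only [smul_eq_mul]
  set m := a * p + b * q with hm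
  have hmp : p < m := by
    have : m - p = b * (q - p) := by rw [hm]; linear_combination p * hab
    nlinarith [mul_pos hb (sub_pos.2 hpq)]
  have hmq : m < q := by
    have : q - m = a * (q - p) := by rw [hm]; linear_combination (-q) * hab
    nlinarith [mul_pos ha (sub_pos.2 hpq)]
  by_contra! hlt
  -- `φ - chord + ε (θ - p) (θ - q)` vanishes at the ends and is positive at `m`
  set β := (Phi x y q - Phi x y p) / (q - p) with hβ
  have hβ' : β * (q - p) = Phi x y q - Phi x y p := div_mul_cancel₀ _ (by linarith)
  set gap := Phi x y m - (a * Phi x y p + b * Phi x y q) with hgap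
  have hgap0 : 0 < gap := by rw [hgap]; linarith
  have hw : 0 < (m - p) * (q - m) := mul_pos (by linarith) (by linarith)
  set ε := gap / (2 * ((m - p) * (q - m))) with hε
  have hε0 : 0 < ε := by positivity
  let ψ := fun θ => Phi x y θ - (Phi x y p + β * (θ - p)) + ε * ((θ - p) * (θ - q))
  have hψp : ψ p = 0 := by simp [ψ]
  have hψq : ψ q = 0 := by simp only [ψ]; rw [hβ']; ring
  have hψm : 0 < ψ m := by
    have e1 : β * (m - p) = b * (Phi x y q - Phi x y p) := by
      rw [← hβ']; rw [hm]; linear_combination β * p * hab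
    have e2 : ε * ((m - p) * (m - q)) = -(gap / 2) := by
      have hw' := hw.ne'
      rw [hε, show (m - p) * (m - q) = -((m - p) * (q - m)) by ring]
      generalize (m - p) * (q - m) = z at hw'
      field_simp
    have e3 : ψ m = gap - gap / 2 := by
      simp only [ψ]
      rw [e1, e2, hgap]
      linear_combination Phi x y p * hab
    rw [e3]; linarith
  have hψc : ContinuousOn ψ (Icc p q) :=
    (((Phi_continuousOn_fixed hx hy).mono (Icc_subset_Icc hp.1 hq.2)).sub (by fun_prop)).add
      (by fun_prop)
  obtain ⟨θ, hθ, hmax⟩ := isCompact_Icc.exists_isMaxOn (nonempty_Icc.2 hpq.le) hψc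
  have hpos : 0 < ψ θ := hψm.trans_le (hmax ⟨hmp.le, hmq.le⟩)
  have hθp : p < θ := lt_of_le_of_ne hθ.1 fun h => by rw [← h, hψp] at hpos; exact lt_irrefl _ hpos
  have hθq : θ < q := lt_of_le_of_ne hθ.2 fun h => by rw [h, hψq] at hpos; exact lt_irrefl _ hpos
  have h0 : 0 < θ := hp.1.trans_lt hθp
  have h1 : θ < π / 2 := hθq.trans_le hq.2
  obtain ⟨t, ht, hV⟩ := Vf_interior hx hy h0 h1
  obtain ⟨htouch, hev⟩ := Dc_touch (k := 0) hx hy ht h0 h1 hV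
  have hloc : IsLocalMax (fun h => Dc x y t 0 θ h - (Phi x y p + β * (θ + 1 * h - p)) +
      ε * ((θ + 1 * h - p) * (θ + 1 * h - q))) 0 := by
    have c2 : Tendsto (fun h : ℝ => θ + 1 * h) (𝓝 0) (𝓝 θ) := by
      simpa using (by fun_prop : Continuous fun h : ℝ => θ + 1 * h).tendsto 0
    filter_upwards [hev, c2.eventually (Icc_mem_nhds hθp hθq)] with h hh hb
    have := hmax hb
    simp only [ψ, mem_ofPred_eq] at this
    simp only [htouch, mul_zero, add_zero]
    linarith [hh.2.2]
  have hc := second_deriv_nonpos hloc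
    (g₁ := fun h => Dc' x y t 0 θ h - β + ε * ((θ + 1 * h - p) + (θ + 1 * h - q)))
    (c := 2 * ε) (hev.mono fun h hh => ?_) ?_
  · linarith
  · have l := line_hasDerivAt θ 1 h
    refine (((Dc_hasDerivAt hh.1).sub (((l.sub_const p).const_mul β).const_add _)).add
      (((l.sub_const p).mul (l.sub_const q)).const_mul ε)).congr_deriv ?_
    ring
  · have l := line_hasDerivAt θ 1 0
    refine (((Dc'_hasDerivAt ht).sub_const β).add
      (((l.sub_const p).add (l.sub_const q)).const_mul ε)).congr_deriv ?_
    rw [Tt_eq_Vf, hV]; ring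

/-! ### Critical points -/

lemma Fd_exp (x y t θ : ℝ) :
    Fd x y (exp t) θ = exp t * (-x * sin θ + y * cos θ) - Tθ t θ := by rw [Fd, Wd_exp]

/-- By convexity, a critical point of `e^t (x cos θ + y sin θ) - W(e^t, θ)` minimises `Phi`. -/
lemma critical_min {x y : ℝ} (hx : x ∈ Ioo (0 : ℝ) 1) (hy : y ∈ Ioo (0 : ℝ) 1) {t θ : ℝ}
    (ht : t < 0) (h0 : 0 < θ) (h1 : θ < π / 2) (hV : Vf t θ = x * cos θ + y * sin θ)
    (hF : Fd x y (exp t) θ = 0) : ∀ θ' ∈ Icc 0 (π / 2), Phi x y θ ≤ Phi x y θ' := by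
  have hD' : Dc' x y t 0 θ 0 = 0 := by
    rw [Fd_exp] at hF
    rw [Dc']; simp; linarith
  obtain ⟨htouch, hev⟩ := Dc_touch (k := 0) hx hy ht h0 h1 hV
  intro θ' hθ'
  by_contra! hlt
  have hθ : θ ∈ Icc 0 (π / 2) := ⟨h0.le, h1.le⟩
  have hl : Tendsto (fun s : ℝ => s * (θ' - θ)) (𝓝 0) (𝓝 0) := by
    simpa using (by fun_prop : Continuous fun s : ℝ => s * (θ' - θ)).tendsto 0
  have hd : HasDerivAt (fun s : ℝ => Dc x y t 0 θ (s * (θ' - θ))) 0 0 := by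
    have l : HasDerivAt (fun s : ℝ => s * (θ' - θ)) (θ' - θ) 0 := by
      simpa using (hasDerivAt_id (0 : ℝ)).mul_const (θ' - θ)
    have l' := Dc_hasDerivAt (x := x) (y := y) (t := t) (k := 0) (θ := θ) (h := 0 * (θ' - θ))
      (by simpa using ht)
    refine (l'.comp (0 : ℝ) l).congr_deriv ?_
    rw [zero_mul, hD', zero_mul]
  have hs := hd.tendsto_slope.mono_left
    (nhdsWithin_mono _ fun s (hs : s ∈ Ioi (0 : ℝ)) => (ne_of_gt hs : s ≠ 0))
  -- the chord of the convex function from `θ` to `θ'` bounds the difference quotients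
  have hle : ∀ᶠ s in 𝓝[>] 0, slope (fun s : ℝ => Dc x y t 0 θ (s * (θ' - θ))) 0 s ≤
      Phi x y θ' - Phi x y θ := by
    filter_upwards [Ioo_mem_nhdsGT one_pos, nhdsWithin_le_nhds (hl.eventually hev)] with s hs he
    rw [slope_def_field, sub_zero, div_le_iff₀ hs.1, zero_mul, htouch]
    have hc := (Phi_convexOn hx hy).2 hθ hθ' (sub_nonneg.2 hs.2.le) hs.1.le (by ring)
    simp only [smul_eq_mul] at hc
    have e : (1 - s) * θ + s * θ' = θ + 1 * (s * (θ' - θ)) := by ring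
    rw [e] at hc
    linarith [he.2.2]
  have := le_of_tendsto hs hle
  linarith

/-- Two minimisers would make `Phi` constant between them; at an intermediate angle other than
`π / 4`, the line of slope `k = -G/H` contradicts the second-order test. -/
lemma min_unique {x y : ℝ} (hx : x ∈ Ioo (0 : ℝ) 1) (hy : y ∈ Ioo (0 : ℝ) 1) {p q : ℝ}
    (hp : p ∈ Icc 0 (π / 2)) (hq : q ∈ Icc 0 (π / 2)) (hpq : p < q)
    (hpm : ∀ θ' ∈ Icc 0 (π / 2), Phi x y p ≤ Phi x y θ') : Phi x y p < Phi x y q := by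
  by_contra! hle
  have hmid : ∃ θ, p < θ ∧ θ < q ∧ θ ≠ π / 4 := by
    by_cases h : (p + q) / 2 = π / 4
    · exact ⟨(p + (p + q) / 2) / 2, by linarith, by linarith, by intro h'; linarith⟩
    · exact ⟨(p + q) / 2, by linarith, by linarith, h⟩
  obtain ⟨θ, hθp, hθq, hne⟩ := hmid
  have hbet : ∀ θ', p ≤ θ' → θ' ≤ q → Phi x y θ' ≤ Phi x y p := by
    intro θ' a b
    have := (Phi_convexOn hx hy).le_max_of_mem_Icc hp hq ⟨a, b⟩
    simpa [hle] using this
  have hθ : θ ∈ Icc 0 (π / 2) := ⟨hp.1.trans hθp.le, hθq.le.trans hq.2⟩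
  have hθm : ∀ θ' ∈ Icc 0 (π / 2), Phi x y θ ≤ Phi x y θ' := fun θ' h =>
    (hbet θ hθp.le hθq.le).trans (hpm θ' h)
  obtain ⟨⟨h0, h1⟩, hF⟩ := min_interior hx hy hθ hθm
  obtain ⟨t, ht, hV⟩ := Vf_interior hx hy h0 h1
  rw [(isRad_of_Vf ht h0 h1 hV).rad_eq, Fd_exp] at hF
  have hH := Hf_pos ht h0 h1
  have hG : Gf t θ ≠ 0 := by
    rcases lt_or_gt_of_ne hne with h | h
    · exact (Gf_pos ht h0.le h).ne'
    · exact (Gf_neg ht h h1.le).ne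
  obtain ⟨htouch, hev⟩ := Dc_touch (k := -Gf t θ / Hf t θ) hx hy ht h0 h1 hV
  have hloc : IsLocalMax (fun h => Dc x y t (-Gf t θ / Hf t θ) θ h) 0 := by
    have c2 : Tendsto (fun h : ℝ => θ + 1 * h) (𝓝 0) (𝓝 θ) := by
      simpa using (by fun_prop : Continuous fun h : ℝ => θ + 1 * h).tendsto 0
    filter_upwards [hev, c2.eventually (Icc_mem_nhds hθp hθq)] with h hh hb
    simp only [htouch]
    exact hh.2.2.trans ((hbet _ hb.1 hb.2).trans (hpm θ hθ))
  have hc := second_deriv_nonpos hloc (hev.mono fun h hh => Dc_hasDerivAt hh.1)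
    (Dc'_hasDerivAt ht)
  have hval : exp t * ((-Gf t θ / Hf t θ) ^ 2 * (x * cos θ + y * sin θ) +
      2 * (-Gf t θ / Hf t θ) * (-x * sin θ + y * cos θ) - (x * cos θ + y * sin θ)) -
      ((-Gf t θ / Hf t θ) ^ 2 * (Tt t θ + Hf t θ) +
        2 * (-Gf t θ / Hf t θ) * (Tθ t θ + Gf t θ) - Tt t θ) = Gf t θ ^ 2 / Hf t θ := by
    have hT : Tθ t θ = exp t * (-x * sin θ + y * cos θ) := by linarith
    rw [hT, Tt_eq_Vf, hV]
    field_simp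
    ring
  rw [hval] at hc
  have : 0 < Gf t θ ^ 2 / Hf t θ := by positivity
  linarith

/-! ### The inverse of the gradient map -/

/-- The strict minimiser property that defines `Ang`. -/
def IsAng (x y θ : ℝ) : Prop :=
  θ ∈ Icc 0 (π / 2) ∧ ∀ θ' ∈ Icc 0 (π / 2), θ' ≠ θ → Phi x y θ < Phi x y θ'

/-- The minimiser of `Phi x y` on `[0, π/2]`, with an arbitrary value where there is no strict
one. -/
noncomputable def Ang (x y : ℝ) : ℝ := Classical.epsilon (IsAng x y)

lemma isAng_of_min {x y : ℝ} (hx : x ∈ Ioo (0 : ℝ) 1) (hy : y ∈ Ioo (0 : ℝ) 1) {θ : ℝ}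
    (hθ : θ ∈ Icc 0 (π / 2)) (hm : ∀ θ' ∈ Icc 0 (π / 2), Phi x y θ ≤ Phi x y θ') :
    IsAng x y θ := by
  refine ⟨hθ, fun θ' hθ' hne => ?_⟩
  rcases lt_or_gt_of_ne hne with h | h
  · refine lt_of_le_of_ne (hm θ' hθ') fun he => ?_
    exact (min_unique hx hy hθ' hθ h fun η hη => he ▸ hm η hη).ne' he
  · exact min_unique hx hy hθ hθ' h hm

lemma isAng_ang {x y : ℝ} (hx : x ∈ Ioo (0 : ℝ) 1) (hy : y ∈ Ioo (0 : ℝ) 1) :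
    IsAng x y (Ang x y) := by
  obtain ⟨θ, hθ, hm⟩ := isCompact_Icc.exists_isMinOn
    (nonempty_Icc.2 (by linarith [pi_pos] : (0 : ℝ) ≤ π / 2)) (Phi_continuousOn_fixed hx hy)
  exact Classical.epsilon_spec ⟨θ, isAng_of_min hx hy hθ fun _ h => hm h⟩

lemma IsAng.eq {x y θ θ' : ℝ} (h : IsAng x y θ) (h' : IsAng x y θ') : θ = θ' := by
  by_contra hne
  exact lt_asymm (h'.2 θ h.1 hne) (h.2 θ' h'.1 (Ne.symm hne))

lemma Ang_le {x y θ : ℝ} (hx : x ∈ Ioo (0 : ℝ) 1) (hy : y ∈ Ioo (0 : ℝ) 1)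
    (hθ : θ ∈ Icc 0 (π / 2)) : Phi x y (Ang x y) ≤ Phi x y θ := by
  rcases eq_or_ne θ (Ang x y) with h | h
  · rw [h]
  · exact ((isAng_ang hx hy).2 θ hθ h).le

lemma Ang_continuousOn : ContinuousOn (fun z : ℝ × ℝ => Ang z.1 z.2) Ω1 :=
  continuousOn_argmax isCompact_Icc (f := fun (z : ℝ × ℝ) θ => -Phi z.1 z.2 θ)
    Phi_continuousOn.neg (fun _ hz => (isAng_ang hz.1 hz.2).1)
    fun _ hz θ hθ hne => neg_lt_neg ((isAng_ang hz.1 hz.2).2 θ hθ hne)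

/-- The saddle point of the minimax problem, in Cartesian coordinates. -/
noncomputable def saddle (z : ℝ × ℝ) : ℝ × ℝ :=
  (Rad z.1 z.2 (Ang z.1 z.2) * cos (Ang z.1 z.2), Rad z.1 z.2 (Ang z.1 z.2) * sin (Ang z.1 z.2))

lemma saddle_continuousOn : ContinuousOn saddle Ω1 := by
  have hR : ContinuousOn (fun z : ℝ × ℝ => Rad z.1 z.2 (Ang z.1 z.2)) Ω1 :=
    Rad_continuousOn.comp (f := fun z : ℝ × ℝ => (z, Ang z.1 z.2))
      (continuousOn_id.prodMk Ang_continuousOn) fun z hz => ⟨hz, (isAng_ang hz.1 hz.2).1⟩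
  exact (hR.mul (continuous_cos.comp_continuousOn Ang_continuousOn)).prodMk
    (hR.mul (continuous_sin.comp_continuousOn Ang_continuousOn))

/-- The saddle point is an interior critical point of `e^t (x cos θ + y sin θ) - W(e^t, θ)`. -/
lemma saddle_polar {x y : ℝ} (hx : x ∈ Ioo (0 : ℝ) 1) (hy : y ∈ Ioo (0 : ℝ) 1) :
    ∃ t < 0, (0 < Ang x y ∧ Ang x y < π / 2) ∧
      Vf t (Ang x y) = x * cos (Ang x y) + y * sin (Ang x y) ∧
      Fd x y (exp t) (Ang x y) = 0 ∧ Rad x y (Ang x y) = exp t := by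
  obtain ⟨⟨h0, h1⟩, hF⟩ := min_interior hx hy (isAng_ang hx hy).1 fun _ h => Ang_le hx hy h
  obtain ⟨t, ht, hV⟩ := Vf_interior hx hy h0 h1
  have hR := (isRad_of_Vf ht h0 h1 hV).rad_eq
  exact ⟨t, ht, ⟨h0, h1⟩, hV, hR ▸ hF, hR⟩

lemma saddle_mapsTo : MapsTo saddle Ω1 B1 := fun z hz => by
  obtain ⟨t, ht, ⟨h0, h1⟩, -, -, hR⟩ := saddle_polar hz.1 hz.2
  rw [saddle, hR]
  exact polar_mem_B1 ht h0 h1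

lemma gradw_saddle {z : ℝ × ℝ} (hz : z ∈ Ω1) : gradw (saddle z) = z := by
  obtain ⟨t, ht, ⟨h0, h1⟩, hV, hF, hR⟩ := saddle_polar hz.1 hz.2
  rw [saddle, hR]
  refine (gradw_eq_iff ht h0 h1).2 ⟨?_, ?_⟩
  · rw [Tt_eq_Vf, hV]
  · rw [Fd_exp] at hF
    linarith

lemma saddle_gradw {b : ℝ × ℝ} (hb : b ∈ B1) : saddle (gradw b) = b := by
  have hz := gradw_mapsTo hb
  obtain ⟨t, θ, ht, h0, h1, rfl⟩ := B1_polar hb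
  obtain ⟨e1, e2⟩ := (gradw_eq_iff ht h0 h1).1 (Prod.mk.eta (p := gradw _)).symm
  set z := gradw (exp t * cos θ, exp t * sin θ) with hzdef
  have hV : Vf t θ = z.1 * cos θ + z.2 * sin θ := by
    rw [Tt_eq_Vf] at e1
    exact (mul_left_cancel₀ (exp_pos t).ne' e1).symm
  have hF : Fd z.1 z.2 (exp t) θ = 0 := by
    rw [Fd_exp]; linarith
  have hθ : θ = Ang z.1 z.2 := (isAng_of_min hz.1 hz.2 ⟨h0.le, h1.le⟩
    (critical_min hz.1 hz.2 ht h0 h1 hV hF)).eq (isAng_ang hz.1 hz.2)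
  rw [saddle, ← hθ, (isRad_of_Vf ht h0 h1 hV).rad_eq]

/-! ### The minimax value -/

lemma iSup_eq_Phi {x y θ : ℝ} (hx : x ∈ Ioo (0 : ℝ) 1) (hy : y ∈ Ioo (0 : ℝ) 1)
    (hθ : θ ∈ Icc 0 (π / 2)) :
    ⨆ r : Icc (0 : ℝ) 1, ((r : ℝ) * (x * cos θ + y * sin θ) - W r θ) = Phi x y θ := by
  have : Nonempty (Icc (0 : ℝ) 1) := ⟨⟨0, by simp⟩⟩
  have hle : ∀ r : Icc (0 : ℝ) 1, (r : ℝ) * (x * cos θ + y * sin θ) - W r θ ≤ Phi x y θ :=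
    fun r => Ff_le_Phi hx hy hθ r.2
  exact le_antisymm (ciSup_le hle)
    (le_ciSup (f := fun r : Icc (0 : ℝ) 1 => (r : ℝ) * (x * cos θ + y * sin θ) - W r θ)
      ⟨_, forall_mem_range.2 hle⟩ ⟨Rad x y θ, (isRad_rad hx hy hθ).1⟩)

lemma u_eq_Phi {x y : ℝ} (hx : x ∈ Ioo (0 : ℝ) 1) (hy : y ∈ Ioo (0 : ℝ) 1) :
    u x y = Phi x y (Ang x y) := by
  have hA := (isAng_ang hx hy).1
  have : Nonempty (Icc (0 : ℝ) (π / 2)) := ⟨⟨_, hA⟩⟩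
  have hu : u x y = ⨅ θ : Icc (0 : ℝ) (π / 2), Phi x y θ :=
    iInf_congr fun θ => iSup_eq_Phi hx hy θ.2
  have hle : ∀ θ : Icc (0 : ℝ) (π / 2), Phi x y (Ang x y) ≤ Phi x y θ :=
    fun θ => Ang_le hx hy θ.2
  rw [hu]
  exact le_antisymm (ciInf_le (f := fun θ : Icc (0 : ℝ) (π / 2) => Phi x y θ)
    ⟨_, forall_mem_range.2 hle⟩ ⟨_, hA⟩) (le_ciInf hle)

lemma u_eq_saddle {z : ℝ × ℝ} (hz : z ∈ Ω1) :
    u z.1 z.2 = z.1 * (saddle z).1 + z.2 * (saddle z).2 - w (saddle z).1 (saddle z).2 := by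
  obtain ⟨t, ht, ⟨h0, h1⟩, -, -, hR⟩ := saddle_polar hz.1 hz.2
  rw [u_eq_Phi hz.1 hz.2, Phi, Ff, saddle, hR, W_exp,
    w_polar (by linarith) h1]
  ring

/-- `∇wᵀ : B₁ → Ω₁` is a bijection with continuous inverse `g : Ω₁ → B₁`,
and `u(x) = ⟨x, g(x)⟩ − w(g(x))` for every `x ∈ Ω₁`. -/
theorem stmt11 :
    ∃ g : ℝ × ℝ → ℝ × ℝ,
      Set.BijOn gradw B1 Ω1 ∧
      Set.MapsTo g Ω1 B1 ∧
      Set.InvOn g gradw B1 Ω1 ∧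
      ContinuousOn g Ω1 ∧
      ∀ x ∈ Ω1, u x.1 x.2 = x.1 * (g x).1 + x.2 * (g x).2 - w (g x).1 (g x).2 := by
  have hinv : InvOn saddle gradw B1 Ω1 := ⟨fun _ => saddle_gradw, fun _ => gradw_saddle⟩
  exact ⟨saddle, hinv.bijOn gradw_mapsTo saddle_mapsTo, saddle_mapsTo, hinv,
    saddle_continuousOn, fun _ => u_eq_saddle⟩
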